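/- There exist universal constants C₁, C₂, C₃ > 0 such that the following holds. Let A > 0, and let K ≥ 2, λ ≥ 1, m ≥ 257 be integers with M := λm. Set β := K(λ+1)/(λ+2), δ := (λ+2)A/K, ε_V := √(2m)·β^{−(λ−1)}·δ, and let V and w_m be as defined below. Let Δ ≥ 4/(m−1) and let μ = Σ_{j=1}^S a_j δ_{t_j} be an atomic measure on 𝕋 with Δ(μ) ≥ Δ and ‖μ‖_TV ≤ A. Let q ∈ ℂ^M satisfy ‖V(𝓕_M μ) − Vq‖_2 ≤ ε_V, and let ν = Σ_{k=1}^{S̃} b_k δ_{s_k} be an atomic measure minimizing ‖ν'‖_TV among all atomic measures ν' with ‖Vq − 𝓕_m ν'‖_2 ≤ ε_V. Then the reweighted measure μ̃ := Σ_{k=1}^{S̃} (b_k / w_m(s_k)) δ_{s_k} satisfies: 𝓔_1^m(μ,μ̃) ≤ C₁·A·M^{1/2}·λ^{1/2}·K^{−λ} + C₁·(1 + M^{1/2}λ^{1/2}K^{−λ})^{1/2}·A·M^{1/4}·λ^{5/4}·K^{−λ/2}; 𝓔_2^m(μ,μ̃) ≤ C₂·A·λ·K^{−λ}; and 𝓔_3^m(μ,μ̃)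 ≤ C₃·A·M^{1/2}·λ^{1/2}·K^{−λ}. -/

import Mathlib

open scoped Real
open Complex

set_option linter.unusedVariables false

noncomputable section

/-- Wrap-around distance on `ℝ` (distance to the nearest integer). -/
def distT (t : ℝ) : ℝ := ⨅ n : ℤ, |t - (n : ℝ)|

/-- Euclidean norm of a complex vector. -/
def norm2 {n : ℕ} (y : Fin n → ℂ) : ℝ := Real.sqrt (∑ i, ‖y i‖ ^ 2)

/-- Total variation norm of the atomic measure with amplitudes `a`. -/
def tvNorm {R : ℕ} (a : Fin R → ℂ) : ℝ := ∑ j, ‖a j‖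

/-- First `M` Fourier coefficients of the atomic measure `∑ j, a j • δ_{t j}`. -/
def fourierCoeffs (M : ℕ) {R : ℕ} (a : Fin R → ℂ) (t : Fin R → ℝ) : Fin M → ℂ :=
  fun k => ∑ j, a j * Complex.exp (-2 * (Real.pi : ℂ) * Complex.I * ((k : ℕ) : ℂ) * ((t j : ℝ) : ℂ))

/-- The function `w(t) = ∑_{k<λ} β^{-k} e^{-2πikt}`. -/
def wFun (β : ℝ) (lam : ℕ) (t : ℝ) : ℂ :=
  ∑ k ∈ Finset.range lam, ((β : ℂ))⁻¹ ^ k * Complex.exp (-2 * (Real.pi : ℂ) * Complex.I * (k : ℂ) * (t : ℂ))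

/-- Condensation matrix `V = [I_m, β⁻¹ I_m, …, β^{-(λ-1)} I_m]`. -/
def Vmat (β : ℝ) (m lam : ℕ) : Matrix (Fin m) (Fin (lam * m)) ℂ :=
  Matrix.of fun i j => if (j : ℕ) % m = (i : ℕ) then ((β : ℂ))⁻¹ ^ ((j : ℕ) / m) else 0

/-- Noise-shaping matrix `H` with `1` on the diagonal and `-β` on the `m`-th subdiagonal. -/
def Hmat (β : ℝ) (m M : ℕ) : Matrix (Fin M) (Fin M) ℂ :=
  Matrix.of fun j k => if (j : ℕ) = (k : ℕ) then 1 else if (j : ℕ) = (k : ℕ) + m then -(β : ℂ) else 0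

/-- `𝒵_K = {-K+1, -K+3, …, K-1}`. -/
def ZK (K : ℕ) : Set ℤ := {n | ∃ k : ℕ, k < K ∧ n = -(K : ℤ) + 1 + 2 * (k : ℤ)}

/-- The Cartesian alphabet `𝒜 = δ(𝒵_K + i𝒵_K)`. -/
def alphabet (K : ℕ) (δ : ℝ) : Set ℂ :=
  {z | ∃ a b : ℤ, a ∈ ZK K ∧ b ∈ ZK K ∧ z = (δ : ℂ) * ((a : ℂ) + (b : ℂ) * Complex.I)}

/-- `L` is a Lipschitz bound for `φ` with respect to the wrap-around distance. -/
def LipBnd (φ : ℝ → ℂ) (L : ℝ) : Prop := ∀ s t : ℝ, ‖φ s - φ t‖ ≤ L * distT (s - t)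

/-- Lipschitz seminorm `|φ|_Lip` with respect to the wrap-around distance. -/
def lipSemi (φ : ℝ → ℂ) : ℝ := sInf {L : ℝ | 0 ≤ L ∧ LipBnd φ L}

/-- Sup norm of `φ`. -/
def supNorm (φ : ℝ → ℂ) : ℝ := sSup {x : ℝ | ∃ t : ℝ, x = ‖φ t‖}

/-- Lipschitz norm `‖φ‖_Lip = max(‖φ‖_∞, |φ|_Lip)`. -/
def lipNorm (φ : ℝ → ℂ) : ℝ := max (supNorm φ) (lipSemi φ)

/-- Dual Lipschitz norm `‖ρ‖_{Lip*}` of the atomic measure `ρ = ∑ j, u j • δ_{r j}`. -/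
def lipStar {R : ℕ} (u : Fin R → ℂ) (r : Fin R → ℝ) : ℝ :=
  sSup {x : ℝ | ∃ φ : ℝ → ℂ, lipNorm φ ≤ 1 ∧ x = ‖∑ j, u j * φ (r j)‖}

/-- `𝓔_Lip(ρ,ν)` for atomic measures. -/
def ELip {R S : ℕ} (u : Fin R → ℂ) (r : Fin R → ℝ) (v : Fin S → ℂ) (s : Fin S → ℝ) : ℝ :=
  sSup {x : ℝ | ∃ φ : ℝ → ℂ, lipNorm φ ≤ 1 ∧
    x = ‖(∑ j, u j * φ (r j)) - (∑ k, v k * φ (s k))‖}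

open scoped Classical in
/-- The neighborhood index set `𝓘_j^M`. -/
def nearIdx {R S : ℕ} (r : Fin R → ℝ) (s : Fin S → ℝ) (M : ℕ) (j : Fin R) : Finset (Fin S) :=
  Finset.univ.filter fun k => distT (r j - s k) ≤ 0.3298 / ((M : ℝ) - 1)

open scoped Classical in
/-- The residual index set `𝓘_0^M`. -/
def farIdx {R S : ℕ} (r : Fin R → ℝ) (s : Fin S → ℝ) (M : ℕ) : Finset (Fin S) :=
  Finset.univ.filter fun k => ∀ j : Fin R, k ∉ nearIdx r s M j

/-- Amplitude error `𝓔_1^M(ρ,ν)`. -/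
def E1 {R S : ℕ} (u : Fin R → ℂ) (r : Fin R → ℝ) (v : Fin S → ℂ) (s : Fin S → ℝ) (M : ℕ) : ℝ :=
  ⨆ j : Fin R, ‖u j - ∑ k ∈ nearIdx r s M j, v k‖

/-- Support error `𝓔_2^M(ρ,ν)`. -/
def E2 {R S : ℕ} (u : Fin R → ℂ) (r : Fin R → ℝ) (v : Fin S → ℂ) (s : Fin S → ℝ) (M : ℕ) : ℝ :=
  ∑ j : Fin R, ∑ k ∈ nearIdx r s M j, ‖v k‖ * distT (r j - s k) ^ 2

/-- Spurious-atom error `𝓔_3^M(ρ,ν)`. -/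
def E3 {R S : ℕ} (u : Fin R → ℂ) (r : Fin R → ℝ) (v : Fin S → ℂ) (s : Fin S → ℝ) (M : ℕ) : ℝ :=
  ∑ k ∈ farIdx r s M, ‖v k‖

/-- Mixed `ℓ∞ + ℓ²` error `𝓔^π_{∞,2}(ρ,ν)` for a permutation `π`. -/
def EInf2 {S : ℕ} (u : Fin S → ℂ) (r : Fin S → ℝ) (v : Fin S → ℂ) (s : Fin S → ℝ)
    (σ : Equiv.Perm (Fin S)) : ℝ :=
  (⨆ j, distT (r j - s (σ j))) +
    Real.sqrt (∑ j, ‖u j - v (σ j)‖ ^ 2) / Real.sqrt (∑ j, ‖u j‖ ^ 2)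

end

namespace SR
noncomputable section

/-- frequencies of the scaled Dirichlet kernel -/
def th (N k : ℕ) : ℝ := π * (2 * (k : ℝ) - ((N : ℝ) - 1)) / N
/-- scaled Dirichlet kernel and its two derivatives -/
def d0 (N : ℕ) (x : ℝ) : ℝ := (1 / (N : ℝ)) * ∑ k ∈ Finset.range N, Real.cos (th N k * x)
def d1 (N : ℕ) (x : ℝ) : ℝ := (1 / (N : ℝ)) * ∑ k ∈ Finset.range N, -(th N k) * Real.sin (th N k * x)
def d2 (N : ℕ) (x : ℝ) : ℝ := (1 / (N : ℝ)) * ∑ k ∈ Finset.range N, -(th N k) ^ 2 * Real.cos (th N k * x)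

lemma hasDeriv_d0 (N : ℕ) (x : ℝ) : HasDerivAt (d0 N) (d1 N x) x := by
  unfold d0 d1
  refine HasDerivAt.const_mul _ ?_
  refine HasDerivAt.fun_sum fun k _ => ?_
  have h : HasDerivAt (fun y : ℝ => th N k * y) (th N k) x := by
    simpa using (hasDerivAt_id x).const_mul (th N k)
  exact h.cos.congr_deriv (by ring)

lemma hasDeriv_d1 (N : ℕ) (x : ℝ) : HasDerivAt (d1 N) (d2 N x) x := by
  unfold d1 d2
  refine HasDerivAt.const_mul _ ?_
  refine HasDerivAt.fun_sum fun k _ => ?_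
  have h : HasDerivAt (fun y : ℝ => th N k * y) (th N k) x := by
    simpa using (hasDerivAt_id x).const_mul (th N k)
  exact ((h.sin).const_mul (-(th N k))).congr_deriv (by ring)

lemma d0_zero (N : ℕ) (hN : 0 < N) : d0 N 0 = 1 := by
  have : (N : ℝ) ≠ 0 := by positivity
  simp [d0, this]

lemma d1_zero (N : ℕ) : d1 N 0 = 0 := by simp [d1]

lemma I0 (N : ℕ) (hN : 0 < N) (x : ℝ) :
    N * Real.sin (π * x / N) * d0 N x = Real.sin (π * x) := by
  have hN' : (N : ℝ) ≠ 0 := by positivity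
  have key : ∀ k : ℕ, 2 * Real.sin (π * x / N) * Real.cos (th N k * x) =
      Real.sin (π * (2 * ((k + 1 : ℕ) : ℝ) - N) * x / N) - Real.sin (π * (2 * (k : ℝ) - N) * x / N) := by
    intro k
    have e1 : π * (2 * ((k + 1 : ℕ) : ℝ) - N) * x / N = th N k * x + π * x / N := by
      unfold th; push_cast; field_simp; ring
    have e2 : π * (2 * (k : ℝ) - N) * x / N = th N k * x - π * x / N := by
      unfold th; field_simp; ring
    rw [e1, e2, Real.sin_add, Real.sin_sub]; ring
  have hs : ∑ k ∈ Finset.range N, 2 * Real.sin (π * x / N) * Real.cos (th N k * x)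
      = 2 * Real.sin (π * x) := by
    rw [Finset.sum_congr rfl (fun k _ => key k)]
    rw [Finset.sum_range_sub (fun k : ℕ => Real.sin (π * (2 * (k : ℝ) - N) * x / N))]
    have e1 : π * (2 * (N : ℝ) - N) * x / N = π * x := by field_simp; ring
    have e2 : π * (2 * ((0 : ℕ) : ℝ) - N) * x / N = -(π * x) := by push_cast; field_simp; ring
    rw [e1, e2, Real.sin_neg]; ring
  rw [← Finset.mul_sum] at hs
  unfold d0
  have e : N * Real.sin (π * x / N) * (1 / (N : ℝ) * ∑ k ∈ Finset.range N, Real.cos (th N k * x))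
      = Real.sin (π * x / N) * ∑ k ∈ Finset.range N, Real.cos (th N k * x) := by
    rw [← mul_assoc]; congr 1; field_simp
  rw [e]
  linarith

lemma I1 (N : ℕ) (hN : 0 < N) (x : ℝ) :
    π * Real.cos (π * x / N) * d0 N x + N * Real.sin (π * x / N) * d1 N x = π * Real.cos (π * x) := by
  have hN' : (N : ℝ) ≠ 0 := by positivity
  have h1 : HasDerivAt (fun y : ℝ => π * y / N) (π / N) x := by
    simpa using ((hasDerivAt_id x).const_mul π).div_const (N : ℝ)
  have h2 : HasDerivAt (fun y : ℝ => π * y) π x := by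
    simpa using ((hasDerivAt_id x).const_mul π)
  have hL := ((h1.sin).const_mul (N : ℝ)).mul (hasDeriv_d0 N x)
  have hR := h2.sin
  have he : (fun y : ℝ => Real.sin (π * y)) = ((fun y : ℝ => N * Real.sin (π * y / N)) * d0 N) := by
    funext y; simp [I0 N hN y]
  rw [he] at hR
  have := hL.unique hR
  field_simp at this
  linarith

lemma I2 (N : ℕ) (hN : 0 < N) (x : ℝ) :
    -(π ^ 2 / N) * Real.sin (π * x / N) * d0 N x + 2 * π * Real.cos (π * x / N) * d1 N x
      + N * Real.sin (π * x / N) * d2 N x = -(π ^ 2 * Real.sin (π * x)) := by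
  have hN' : (N : ℝ) ≠ 0 := by positivity
  have h1 : HasDerivAt (fun y : ℝ => π * y / N) (π / N) x := by
    simpa using ((hasDerivAt_id x).const_mul π).div_const (N : ℝ)
  have h2 : HasDerivAt (fun y : ℝ => π * y) π x := by
    simpa using ((hasDerivAt_id x).const_mul π)
  have hL := (((h1.cos).const_mul (π : ℝ)).mul (hasDeriv_d0 N x)).add
    (((h1.sin).const_mul (N : ℝ)).mul (hasDeriv_d1 N x))
  have hR := h2.cos.const_mul π
  have he : (fun y : ℝ => π * Real.cos (π * y)) =
      ((fun y : ℝ => π * Real.cos (π * y / N)) * d0 N + (fun y : ℝ => N * Real.sin (π * y / N)) * d1 N) := by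
    funext y; simp [I1 N hN y]
  rw [he] at hR
  have := hL.unique hR
  have e : -(π ^ 2 / N) * Real.sin (π * x / N) * d0 N x + 2 * π * Real.cos (π * x / N) * d1 N x
      + N * Real.sin (π * x / N) * d2 N x =
      π * (-Real.sin (π * x / N) * (π / N)) * d0 N x + π * Real.cos (π * x / N) * d1 N x +
      (N * (Real.cos (π * x / N) * (π / N)) * d1 N x + N * Real.sin (π * x / N) * d2 N x) := by
    field_simp; ring
  rw [e, this]; ring

/-- the envelope -/
def g (N : ℕ) (x : ℝ) : ℝ := 1 / (N * |Real.sin (π * x / N)|)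

lemma g_nonneg (N : ℕ) (x : ℝ) : 0 ≤ g N x := by unfold g; positivity

lemma d0_bd (N : ℕ) (hN : 0 < N) (x : ℝ) (hs : Real.sin (π * x / N) ≠ 0) :
    |d0 N x| = g N x * |Real.sin (π * x)| := by
  have hN' : (0 : ℝ) < N := by positivity
  have := abs_pos.mpr hs
  rw [← I0 N hN x, abs_mul, abs_mul, g, abs_of_pos hN']
  field_simp

lemma d1_bd (N : ℕ) (hN : 0 < N) (x : ℝ) (hs : Real.sin (π * x / N) ≠ 0) :
    |d1 N x| ≤ π * g N x * (|Real.cos (π * x)| + g N x * |Real.sin (π * x)|) := by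
  have hN' : (0 : ℝ) < N := by positivity
  have hs' := abs_pos.mpr hs
  have h := I1 N hN x
  have h0 := d0_bd N hN x hs
  have hpi := Real.pi_pos
  have e : N * |Real.sin (π * x / N)| * |d1 N x| ≤ π * (|Real.cos (π * x)| + g N x * |Real.sin (π * x)|) := by
    calc N * |Real.sin (π * x / N)| * |d1 N x| = |N * Real.sin (π * x / N) * d1 N x| := by
          rw [abs_mul, abs_mul, abs_of_pos hN']
      _ = |π * Real.cos (π * x) - π * Real.cos (π * x / N) * d0 N x| := by congr 1; linarith
      _ ≤ |π * Real.cos (π * x)| + |π * Real.cos (π * x / N) * d0 N x| := abs_sub _ _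
      _ = π * |Real.cos (π * x)| + π * |Real.cos (π * x / N)| * |d0 N x| := by
          rw [abs_mul, abs_mul, abs_mul, abs_of_pos hpi]
      _ ≤ π * |Real.cos (π * x)| + π * 1 * |d0 N x| := by
          gcongr; exact Real.abs_cos_le_one _
      _ = _ := by rw [h0]; ring
  have : |d1 N x| = g N x * (N * |Real.sin (π * x / N)| * |d1 N x|) := by
    unfold g; field_simp
  rw [this]
  calc _ ≤ g N x * (π * (|Real.cos (π * x)| + g N x * |Real.sin (π * x)|)) := by
        gcongr; exact g_nonneg N x
    _ = _ := by ring

lemma d2_bd (N : ℕ) (hN : 0 < N) (x : ℝ) (hs : Real.sin (π * x / N) ≠ 0) :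
    |d2 N x| ≤ π ^ 2 * g N x * (|Real.sin (π * x)| +
      2 * g N x * (|Real.cos (π * x)| + g N x * |Real.sin (π * x)|)) := by
  have hN' : (0 : ℝ) < N := by positivity
  have hN1 : (1 : ℝ) ≤ N := by exact_mod_cast hN
  have hs' := abs_pos.mpr hs
  have h := I2 N hN x
  have hI0 := I0 N hN x
  have h1 := d1_bd N hN x hs
  have hpi := Real.pi_pos
  have e : N * |Real.sin (π * x / N)| * |d2 N x| ≤ π ^ 2 * (|Real.sin (π * x)| +
      2 * g N x * (|Real.cos (π * x)| + g N x * |Real.sin (π * x)|)) := by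
    calc N * |Real.sin (π * x / N)| * |d2 N x| = |N * Real.sin (π * x / N) * d2 N x| := by
          rw [abs_mul, abs_mul, abs_of_pos hN']
      _ = |(π ^ 2 * (1 / (N : ℝ) ^ 2 - 1)) * Real.sin (π * x) - 2 * π * Real.cos (π * x / N) * d1 N x| := by
          congr 1
          have : (π ^ 2 / N) * Real.sin (π * x / N) * d0 N x = π ^ 2 / N ^ 2 * Real.sin (π * x) := by
            rw [← hI0]; field_simp
          have e2 : (π ^ 2 * (1 / (N : ℝ) ^ 2 - 1)) * Real.sin (π * x) =
            π ^ 2 / N ^ 2 * Real.sin (π * x) - π ^ 2 * Real.sin (π * x) := by ring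
          rw [e2, ← this]; linarith
      _ ≤ |(π ^ 2 * (1 / (N : ℝ) ^ 2 - 1)) * Real.sin (π * x)| + |2 * π * Real.cos (π * x / N) * d1 N x| := abs_sub _ _
      _ = π ^ 2 * |1 / (N : ℝ) ^ 2 - 1| * |Real.sin (π * x)| + 2 * π * |Real.cos (π * x / N)| * |d1 N x| := by
          rw [abs_mul, abs_mul, abs_mul, abs_mul, abs_of_pos (by positivity : (0 : ℝ) < 2 * π),
            abs_of_pos (by positivity : (0 : ℝ) < π ^ 2)]
      _ ≤ π ^ 2 * 1 * |Real.sin (π * x)| + 2 * π * 1 * |d1 N x| := by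
          gcongr
          · rw [abs_le]
            have : 1 / (N : ℝ) ^ 2 ≤ 1 := by
              rw [div_le_one (by positivity)]; nlinarith
            have : 0 ≤ 1 / (N : ℝ) ^ 2 := by positivity
            constructor <;> linarith
          · exact Real.abs_cos_le_one _
      _ ≤ π ^ 2 * 1 * |Real.sin (π * x)| + 2 * π * 1 * (π * g N x * (|Real.cos (π * x)| + g N x * |Real.sin (π * x)|)) := by
          gcongr
      _ = _ := by ring
  have : |d2 N x| = g N x * (N * |Real.sin (π * x / N)| * |d2 N x|) := by
    unfold g; field_simp
  rw [this]
  calc _ ≤ g N x * (π ^ 2 * (|Real.sin (π * x)| +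
      2 * g N x * (|Real.cos (π * x)| + g N x * |Real.sin (π * x)|))) := by
        gcongr; exact g_nonneg N x
    _ = _ := by ring

/-- elementary trigonometric polynomial inequalities -/
lemma trigA (s c : ℝ) (hs : 0 ≤ s) (hc : 0 ≤ c) (h : s ^ 2 + c ^ 2 = 1) : s ^ 3 * c ≤ 0.325 := by
  have h1 : (s ^ 3 * c) ^ 2 ≤ 0.325 ^ 2 := by
    have : c ^ 2 = 1 - s ^ 2 := by linarith
    have e : (s ^ 3 * c) ^ 2 = (s ^ 2) ^ 3 * (1 - s ^ 2) := by rw [← this]; ring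
    rw [e]
    set y := s ^ 2
    nlinarith [sq_nonneg (y * (y - 3 / 4)), sq_nonneg (y - 3 / 4), sq_nonneg (y ^ 2 - 9 / 16), sq_nonneg y]
  exact abs_le_of_sq_le_sq' h1 (by norm_num) |>.2

lemma trigB (s c : ℝ) (h : s ^ 2 + c ^ 2 = 1) : 12 * s ^ 2 * c ^ 2 + 4 * s ^ 4 ≤ 4.5 := by
  have : c ^ 2 = 1 - s ^ 2 := by linarith
  rw [this]
  nlinarith [sq_nonneg (s ^ 2 - 3 / 4)]

lemma abs_sq_add (y : ℝ) : |Real.sin y| ^ 2 + |Real.cos y| ^ 2 = 1 := by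
  rw [sq_abs, sq_abs]; exact Real.sin_sq_add_cos_sq y

end
end SR

namespace SR
noncomputable section

def K0 (N : ℕ) (x : ℝ) : ℝ := d0 N x ^ 4
def K1 (N : ℕ) (x : ℝ) : ℝ := 4 * d0 N x ^ 3 * d1 N x
def K2 (N : ℕ) (x : ℝ) : ℝ := 12 * d0 N x ^ 2 * d1 N x ^ 2 + 4 * d0 N x ^ 3 * d2 N x
def s0 (N : ℕ) (x : ℝ) : ℝ := N / (2 * π) * Real.sin (2 * π / N * x)
def s1 (N : ℕ) (x : ℝ) : ℝ := Real.cos (2 * π / N * x)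
def s2 (N : ℕ) (x : ℝ) : ℝ := -(2 * π / N) * Real.sin (2 * π / N * x)
def F0 (N : ℕ) (α β : ℂ) (x : ℝ) : ℂ := (K0 N x : ℂ) * (α + β * (s0 N x : ℂ))
def F1 (N : ℕ) (α β : ℂ) (x : ℝ) : ℂ :=
  (K1 N x : ℂ) * (α + β * (s0 N x : ℂ)) + (K0 N x : ℂ) * (β * (s1 N x : ℂ))
def F2 (N : ℕ) (α β : ℂ) (x : ℝ) : ℂ :=
  (K2 N x : ℂ) * (α + β * (s0 N x : ℂ)) + 2 * ((K1 N x : ℂ) * (β * (s1 N x : ℂ)))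
    + (K0 N x : ℂ) * (β * (s2 N x : ℂ))

lemma hasDeriv_K0 (N : ℕ) (x : ℝ) : HasDerivAt (K0 N) (K1 N x) x := by
  have := (hasDeriv_d0 N x).pow 4
  exact this.congr_deriv (by unfold K1; push_cast; ring)

lemma hasDeriv_K1 (N : ℕ) (x : ℝ) : HasDerivAt (K1 N) (K2 N x) x := by
  have := (((hasDeriv_d0 N x).pow 3).const_mul 4).mul (hasDeriv_d1 N x)
  exact this.congr_deriv (by unfold K2; simp; ring)

lemma hasDeriv_s0 (N : ℕ) (hN : 0 < N) (x : ℝ) : HasDerivAt (s0 N) (s1 N x) x := by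
  have h : HasDerivAt (fun y : ℝ => 2 * π / N * y) (2 * π / N) x := by
    simpa using (hasDerivAt_id x).const_mul (2 * π / (N : ℝ))
  have hpi := Real.pi_pos
  have hN' : (0 : ℝ) < N := by positivity
  exact ((h.sin).const_mul (N / (2 * π))).congr_deriv (by unfold s1; field_simp)

lemma hasDeriv_s1 (N : ℕ) (hN : 0 < N) (x : ℝ) : HasDerivAt (s1 N) (s2 N x) x := by
  have h : HasDerivAt (fun y : ℝ => 2 * π / N * y) (2 * π / N) x := by
    simpa using (hasDerivAt_id x).const_mul (2 * π / (N : ℝ))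
  exact (h.cos).congr_deriv (by unfold s2; ring)

lemma hasDeriv_F0 (N : ℕ) (hN : 0 < N) (α β : ℂ) (x : ℝ) :
    HasDerivAt (F0 N α β) (F1 N α β x) x := by
  have h1 := (hasDeriv_K0 N x).ofReal_comp
  have h2 := ((hasDeriv_s0 N hN x).ofReal_comp.const_mul β).const_add α
  exact (h1.mul h2).congr_deriv (by unfold F1; ring)

lemma hasDeriv_F1 (N : ℕ) (hN : 0 < N) (α β : ℂ) (x : ℝ) :
    HasDerivAt (F1 N α β) (F2 N α β x) x := by
  have h0 := (hasDeriv_K0 N x).ofReal_comp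
  have h1 := (hasDeriv_K1 N x).ofReal_comp
  have h2 := ((hasDeriv_s0 N hN x).ofReal_comp.const_mul β).const_add α
  have h3 := ((hasDeriv_s1 N hN x).ofReal_comp.const_mul β)
  exact ((h1.mul h2).add (h0.mul h3)).congr_deriv (by unfold F2; ring)

lemma K0_bd (N : ℕ) (hN : 0 < N) (x : ℝ) (hs : Real.sin (π * x / N) ≠ 0) :
    |K0 N x| ≤ g N x ^ 4 := by
  unfold K0
  rw [abs_pow, d0_bd N hN x hs]
  have := g_nonneg N x
  have h1 := Real.abs_sin_le_one (π * x)
  gcongr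
  nlinarith [abs_nonneg (Real.sin (π * x))]

lemma K1_bd (N : ℕ) (hN : 0 < N) (x : ℝ) (hs : Real.sin (π * x / N) ≠ 0) :
    |K1 N x| ≤ 12.567 * g N x ^ 4 * (0.325 + g N x) := by
  unfold K1
  have hg := g_nonneg N x
  have h1 := Real.abs_sin_le_one (π * x)
  have hd1 := d1_bd N hN x hs
  have hA := trigA _ _ (abs_nonneg (Real.sin (π * x))) (abs_nonneg (Real.cos (π * x))) (abs_sq_add _)
  rw [abs_mul, abs_mul, abs_pow, d0_bd N hN x hs, abs_of_pos (by norm_num : (0 : ℝ) < 4)]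
  set s := |Real.sin (π * x)|
  set c := |Real.cos (π * x)|
  have hs0 : 0 ≤ s := abs_nonneg _
  set γ := g N x
  have hpi : π ≤ 3.14175 := by linarith [Real.pi_lt_d4]
  have hs4 : s ^ 4 ≤ 1 := pow_le_one₀ hs0 h1
  calc 4 * (γ * s) ^ 3 * |d1 N x| ≤ 4 * (γ * s) ^ 3 * (π * γ * (c + γ * s)) := by gcongr
    _ = 4 * π * (γ ^ 4 * (s ^ 3 * c + γ * s ^ 4)) := by ring
    _ ≤ 4 * 3.14175 * (γ ^ 4 * (0.325 + γ * 1)) := by gcongr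
    _ = _ := by ring

lemma K2_bd (N : ℕ) (hN : 0 < N) (x : ℝ) (hs : Real.sin (π * x / N) ≠ 0) :
    |K2 N x| ≤ 9.8697 * g N x ^ 4 * (4.5 + 10.4 * g N x + 20 * g N x ^ 2) := by
  unfold K2
  have hg := g_nonneg N x
  have h1 := Real.abs_sin_le_one (π * x)
  have hd1 := d1_bd N hN x hs
  have hd2 := d2_bd N hN x hs
  have hd0 := d0_bd N hN x hs
  have hA := trigA _ _ (abs_nonneg (Real.sin (π * x))) (abs_nonneg (Real.cos (π * x))) (abs_sq_add _)
  have hB := trigB _ _ (abs_sq_add (π * x))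
  set s := |Real.sin (π * x)|
  set c := |Real.cos (π * x)|
  have hs0 : 0 ≤ s := abs_nonneg _
  have hc0 : 0 ≤ c := abs_nonneg _
  set γ := g N x
  have hpi0 := Real.pi_pos
  have hpi : π ^ 2 ≤ 9.8697 := by nlinarith [Real.pi_lt_d6]
  have hs4 : s ^ 4 ≤ 1 := pow_le_one₀ hs0 h1
  calc |12 * d0 N x ^ 2 * d1 N x ^ 2 + 4 * d0 N x ^ 3 * d2 N x|
      ≤ |12 * d0 N x ^ 2 * d1 N x ^ 2| + |4 * d0 N x ^ 3 * d2 N x| := abs_add_le _ _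
    _ = 12 * |d0 N x| ^ 2 * |d1 N x| ^ 2 + 4 * |d0 N x| ^ 3 * |d2 N x| := by
        simp only [abs_mul, abs_pow]; norm_num
    _ ≤ 12 * (γ * s) ^ 2 * (π * γ * (c + γ * s)) ^ 2
        + 4 * (γ * s) ^ 3 * (π ^ 2 * γ * (s + 2 * γ * (c + γ * s))) := by
        rw [hd0]; gcongr
    _ = π ^ 2 * (γ ^ 4 * ((12 * s ^ 2 * c ^ 2 + 4 * s ^ 4) + 32 * γ * (s ^ 3 * c) + 20 * γ ^ 2 * s ^ 4)) := by ring
    _ ≤ 9.8697 * (γ ^ 4 * (4.5 + 32 * γ * 0.325 + 20 * γ ^ 2 * 1)) := by gcongr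
    _ = _ := by ring

lemma gs0_bd (N : ℕ) (hN : 0 < N) (x : ℝ) (hs : Real.sin (π * x / N) ≠ 0) :
    g N x * |s0 N x| ≤ 0.3184 := by
  have hN' : (0 : ℝ) < N := by positivity
  have hs' := abs_pos.mpr hs
  have hpi := Real.pi_gt_d4
  have hpi0 := Real.pi_pos
  have e : 2 * π / N * x = 2 * (π * x / N) := by ring
  unfold s0 g
  rw [e, Real.sin_two_mul, abs_mul, abs_mul, abs_mul, abs_of_pos (by positivity : (0 : ℝ) < N / (2 * π)),
    abs_of_pos (by norm_num : (0 : ℝ) < 2)]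
  have h1 := Real.abs_cos_le_one (π * x / N)
  have : 1 / (N * |Real.sin (π * x / N)|) * (N / (2 * π) * (2 * |Real.sin (π * x / N)| * |Real.cos (π * x / N)|))
    = |Real.cos (π * x / N)| / π := by field_simp
  rw [this, div_le_iff₀ hpi0]
  nlinarith

lemma gs2_bd (N : ℕ) (hN : 64 ≤ N) (x : ℝ) (hs : Real.sin (π * x / N) ≠ 0) :
    g N x * |s2 N x| ≤ 0.0031 := by
  have hN' : (64 : ℝ) ≤ N := by exact_mod_cast hN
  have hN0 : (0 : ℝ) < N := by linarith
  have h := gs0_bd N (by omega) x hs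
  have hg := g_nonneg N x
  have hpi0 := Real.pi_pos
  have hpi : π ^ 2 ≤ 9.8697 := by nlinarith [Real.pi_lt_d6]
  have e : s2 N x = -(4 * π ^ 2 / N ^ 2) * s0 N x := by
    unfold s2 s0; field_simp; ring
  rw [e, abs_mul, abs_neg, abs_of_pos (by positivity : (0 : ℝ) < 4 * π ^ 2 / N ^ 2)]
  have h2 : 4 * π ^ 2 / (N : ℝ) ^ 2 ≤ 0.00964 := by
    rw [div_le_iff₀ (by positivity)]; nlinarith
  calc g N x * (4 * π ^ 2 / N ^ 2 * |s0 N x|) = (4 * π ^ 2 / N ^ 2) * (g N x * |s0 N x|) := by ring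
    _ ≤ 0.00964 * 0.3184 := by gcongr
    _ ≤ 0.0031 := by norm_num

def Ph0 (a b G : ℝ) : ℝ := a * G + 0.3184 * b
def Ph1 (a b G : ℝ) : ℝ := 12.567 * (0.325 + G) * (a * G + 0.3184 * b) + G * b
def Ph2 (a b G : ℝ) : ℝ := 9.8697 * (4.5 + 10.4 * G + 20 * G ^ 2) * (a * G + 0.3184 * b)
  + 2 * (12.567 * (0.325 + G) * G * b) + 0.0031 * b

lemma aux_lin (N : ℕ) (hN : 64 ≤ N) (x : ℝ) (hs : Real.sin (π * x / N) ≠ 0) (α β : ℂ) (a b G : ℝ)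
    (ha : ‖α‖ ≤ a) (hb : ‖β‖ ≤ b) (hG : g N x ≤ G) :
    g N x * ‖α + β * (s0 N x : ℂ)‖ ≤ a * G + 0.3184 * b := by
  have hg := g_nonneg N x
  have h := gs0_bd N (by omega) x hs
  have hG0 : 0 ≤ G := hg.trans hG
  have hb0 : 0 ≤ b := (norm_nonneg _).trans hb
  have ha0 : 0 ≤ a := (norm_nonneg _).trans ha
  calc g N x * ‖α + β * (s0 N x : ℂ)‖ ≤ g N x * (‖α‖ + ‖β‖ * |s0 N x|) := by
        gcongr
        refine (norm_add_le _ _).trans ?_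
        rw [norm_mul, Complex.norm_real, Real.norm_eq_abs]
    _ = g N x * ‖α‖ + (g N x * |s0 N x|) * ‖β‖ := by ring
    _ ≤ G * a + 0.3184 * b := by gcongr
    _ = _ := by ring

lemma F0_bd (N : ℕ) (hN : 64 ≤ N) (x : ℝ) (hs : Real.sin (π * x / N) ≠ 0) (α β : ℂ) (a b G : ℝ)
    (ha : ‖α‖ ≤ a) (hb : ‖β‖ ≤ b) (hG : g N x ≤ G) :
    ‖F0 N α β x‖ ≤ g N x ^ 3 * Ph0 a b G := by
  have hg := g_nonneg N x
  have h := aux_lin N hN x hs α β a b G ha hb hG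
  unfold F0 Ph0
  rw [norm_mul, Complex.norm_real, Real.norm_eq_abs]
  calc |K0 N x| * ‖α + β * (s0 N x : ℂ)‖ ≤ g N x ^ 4 * ‖α + β * (s0 N x : ℂ)‖ := by
        gcongr; exact K0_bd N (by omega) x hs
    _ = g N x ^ 3 * (g N x * ‖α + β * (s0 N x : ℂ)‖) := by ring
    _ ≤ _ := by gcongr

lemma F1_bd (N : ℕ) (hN : 64 ≤ N) (x : ℝ) (hs : Real.sin (π * x / N) ≠ 0) (α β : ℂ) (a b G : ℝ)
    (ha : ‖α‖ ≤ a) (hb : ‖β‖ ≤ b) (hG : g N x ≤ G) :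
    ‖F1 N α β x‖ ≤ g N x ^ 3 * Ph1 a b G := by
  have hg := g_nonneg N x
  have hG0 : 0 ≤ G := hg.trans hG
  have hb0 : 0 ≤ b := (norm_nonneg _).trans hb
  have ha0 : 0 ≤ a := (norm_nonneg _).trans ha
  have h := aux_lin N hN x hs α β a b G ha hb hG
  have hK0 := K0_bd N (by omega) x hs
  have hK1 := K1_bd N (by omega) x hs
  have hs1 : |s1 N x| ≤ 1 := Real.abs_cos_le_one _
  unfold F1 Ph1
  refine (norm_add_le _ _).trans ?_
  simp only [norm_mul, Complex.norm_real, Real.norm_eq_abs]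
  calc |K1 N x| * ‖α + β * (s0 N x : ℂ)‖ + |K0 N x| * (‖β‖ * |s1 N x|)
      ≤ 12.567 * g N x ^ 4 * (0.325 + g N x) * ‖α + β * (s0 N x : ℂ)‖ + g N x ^ 4 * (b * 1) := by
        gcongr
    _ = g N x ^ 3 * (12.567 * (0.325 + g N x) * (g N x * ‖α + β * (s0 N x : ℂ)‖) + g N x * b) := by ring
    _ ≤ _ := by gcongr

lemma F2_bd (N : ℕ) (hN : 64 ≤ N) (x : ℝ) (hs : Real.sin (π * x / N) ≠ 0) (α β : ℂ) (a b G : ℝ)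
    (ha : ‖α‖ ≤ a) (hb : ‖β‖ ≤ b) (hG : g N x ≤ G) :
    ‖F2 N α β x‖ ≤ g N x ^ 3 * Ph2 a b G := by
  have hg := g_nonneg N x
  have hG0 : 0 ≤ G := hg.trans hG
  have hb0 : 0 ≤ b := (norm_nonneg _).trans hb
  have ha0 : 0 ≤ a := (norm_nonneg _).trans ha
  have h := aux_lin N hN x hs α β a b G ha hb hG
  have hK0 := K0_bd N (by omega) x hs
  have hK1 := K1_bd N (by omega) x hs
  have hK2 := K2_bd N (by omega) x hs
  have hs1 : |s1 N x| ≤ 1 := Real.abs_cos_le_one _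
  have hs2 := gs2_bd N hN x hs
  unfold F2 Ph2
  refine (norm_add₃_le).trans ?_
  simp only [norm_mul, Complex.norm_real, Real.norm_eq_abs, Complex.norm_ofNat]
  calc |K2 N x| * ‖α + β * (s0 N x : ℂ)‖ + 2 * (|K1 N x| * (‖β‖ * |s1 N x|)) + |K0 N x| * (‖β‖ * |s2 N x|)
      ≤ 9.8697 * g N x ^ 4 * (4.5 + 10.4 * g N x + 20 * g N x ^ 2) * ‖α + β * (s0 N x : ℂ)‖
        + 2 * (12.567 * g N x ^ 4 * (0.325 + g N x) * (b * 1)) + g N x ^ 4 * (b * |s2 N x|) := by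
        gcongr
    _ = g N x ^ 3 * (9.8697 * (4.5 + 10.4 * g N x + 20 * g N x ^ 2) * (g N x * ‖α + β * (s0 N x : ℂ)‖)
        + 2 * (12.567 * (0.325 + g N x) * g N x * b) + (g N x * |s2 N x|) * b) := by ring
    _ ≤ _ := by gcongr

end
end SR

namespace SR
noncomputable section

lemma sinz (N : ℕ) (hN : 64 ≤ N) (u : ℝ) (hu : 0 < u) (hu' : u ≤ 0.51 * N) :
    let z := π * u / N
    0 < z ∧ z ≤ 1.6023 ∧ z * (1 - z ^ 2 / 6) ≤ Real.sin z ∧ 0 < Real.sin z := by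
  intro z
  have hN' : (64 : ℝ) ≤ N := by exact_mod_cast hN
  have hN0 : (0 : ℝ) < N := by linarith
  have hpi0 := Real.pi_pos
  have hpi := Real.pi_lt_d4
  have hz : 0 < z := by positivity
  have hz2 : z ≤ 1.6023 := by
    show π * u / N ≤ _
    rw [div_le_iff₀ hN0]; nlinarith
  have h := Real.sin_ge_sub_cube hz.le
  refine ⟨hz, hz2, by nlinarith, ?_⟩
  have : 0 < z * (1 - z ^ 2 / 6) := by
    apply mul_pos hz; nlinarith
  nlinarith

lemma g_eq (N : ℕ) (hN : 64 ≤ N) (u : ℝ) (hu : 0 < u) (hu' : u ≤ 0.51 * N) :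
    g N u ≤ (1 + 0.2915 * (π * u / N) ^ 2) / (π * u) := by
  obtain ⟨hz, hz2, h3, h4⟩ := sinz N hN u hu hu'
  have hN' : (64 : ℝ) ≤ N := by exact_mod_cast hN
  have hN0 : (0 : ℝ) < N := by linarith
  have hpi0 := Real.pi_pos
  unfold g
  rw [abs_of_pos h4]
  have e : π * u = N * (π * u / N) := by field_simp
  set z := π * u / N
  rw [e, div_le_div_iff₀ (by positivity) (by positivity)]
  have hy : z ^ 2 ≤ 2.5674 := by nlinarith
  have h5 : 1 ≤ (1 + 0.2915 * z ^ 2) * (1 - z ^ 2 / 6) := by nlinarith [sq_nonneg z]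
  have h6 : z ≤ (1 + 0.2915 * z ^ 2) * Real.sin z := by
    calc z = z * 1 := by ring
      _ ≤ z * ((1 + 0.2915 * z ^ 2) * (1 - z ^ 2 / 6)) := by gcongr
      _ = (1 + 0.2915 * z ^ 2) * (z * (1 - z ^ 2 / 6)) := by ring
      _ ≤ _ := by gcongr
  nlinarith

lemma g_le (N : ℕ) (hN : 64 ≤ N) (u : ℝ) (hu : 0 < u) (hu' : u ≤ 0.51 * N) :
    g N u ≤ 0.31832 / u + 0.0073 := by
  have h := g_eq N hN u hu hu'
  obtain ⟨hz, hz2, h3, h4⟩ := sinz N hN u hu hu'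
  have hN' : (64 : ℝ) ≤ N := by exact_mod_cast hN
  have hN0 : (0 : ℝ) < N := by linarith
  have hpi0 := Real.pi_pos
  have hpi := Real.pi_gt_d6
  refine h.trans ?_
  have e : (1 + 0.2915 * (π * u / N) ^ 2) / (π * u) = 1 / π / u + 0.2915 * (π * u / N) / N := by
    field_simp
  rw [e]
  have h1 : 1 / π ≤ 0.31832 := by
    rw [div_le_iff₀ hpi0]; nlinarith
  have h2 : 0.2915 * (π * u / N) / N ≤ 0.0073 := by
    rw [div_le_iff₀ hN0]; nlinarith
  gcongr

lemma g3_le (N : ℕ) (hN : 64 ≤ N) (u : ℝ) (hu : 0 < u) (hu' : u ≤ 0.51 * N) :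
    g N u ^ 3 ≤ 0.03226 / u ^ 3 + 0.0043 / u ^ 2 := by
  have h := g_eq N hN u hu hu'
  obtain ⟨hz, hz2, h3, h4⟩ := sinz N hN u hu hu'
  have hN' : (64 : ℝ) ≤ N := by exact_mod_cast hN
  have hN0 : (0 : ℝ) < N := by linarith
  have hpi0 := Real.pi_pos
  have hpi := Real.pi_gt_d6
  have hg := g_nonneg N u
  have h5 : (1 + 0.2915 * (π * u / N) ^ 2) ^ 3 ≤ 1 + 1.6925 * (π * u / N) ^ 2 := by
    set z := π * u / N
    have hy : z ^ 2 ≤ 2.5674 := by nlinarith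
    have hy0 := sq_nonneg z
    set y := z ^ 2
    have : 0.8745 + 0.2549168 * y + 0.02477 * y ^ 2 ≤ 1.6925 := by nlinarith
    nlinarith [mul_le_mul_of_nonneg_left this hy0]
  have hpi3 : 1 / π ^ 3 ≤ 0.03226 := by
    rw [div_le_iff₀ (by positivity)]
    have : (3.141592 : ℝ) ^ 3 ≤ π ^ 3 := by gcongr
    nlinarith
  have hpi1 : 1 / π ≤ 0.31832 := by
    rw [div_le_iff₀ hpi0]; nlinarith
  have h6 : 1 / (N : ℝ) ≤ 0.51 / u := by
    rw [div_le_div_iff₀ hN0 hu]; linarith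
  have h7 : 1 / (N : ℝ) ≤ 1 / 64 := by
    rw [div_le_div_iff₀ hN0 (by norm_num)]; linarith
  calc g N u ^ 3 ≤ ((1 + 0.2915 * (π * u / N) ^ 2) / (π * u)) ^ 3 := by gcongr
    _ = (1 + 0.2915 * (π * u / N) ^ 2) ^ 3 / (π * u) ^ 3 := by rw [div_pow]
    _ ≤ (1 + 1.6925 * (π * u / N) ^ 2) / (π * u) ^ 3 := by gcongr
    _ = 1 / π ^ 3 / u ^ 3 + 1.6925 * (1 / π) * (1 / N) * (1 / N) / u := by field_simp
    _ ≤ 0.03226 / u ^ 3 + 1.6925 * 0.31832 * (1 / 64) * (0.51 / u) / u := by gcongr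
    _ = 0.03226 / u ^ 3 + (1.6925 * 0.31832 * (1 / 64) * 0.51) / u ^ 2 := by field_simp
    _ ≤ _ := by gcongr; norm_num

def fB (u : ℝ) : ℝ := 0.03226 / u ^ 3 + 0.0043 / u ^ 2
def hB (u : ℝ) : ℝ := 0.03226 / (1.99 * u ^ 2) + 0.0043 / (0.995 * u)
def BB (d : ℝ) : ℝ := fB d + hB (d + 0.4975)
def GG (d : ℝ) : ℝ := 0.31832 / d + 0.0073

lemma fB_tel (c : ℝ) (hc : 0.4975 < c) : fB c ≤ hB (c - 0.4975) - hB (c + 0.4975) := by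
  unfold fB hB
  have h1 : 0 < c - 0.4975 := by linarith
  have h2 : 0 < c + 0.4975 := by linarith
  have h0 : 0 < c := by linarith
  have hsq : 0 < c ^ 2 - 0.4975 ^ 2 := by nlinarith
  have e1 : 0.03226 / (1.99 * (c - 0.4975) ^ 2) - 0.03226 / (1.99 * (c + 0.4975) ^ 2)
      = 0.03226 * (c / (c ^ 2 - 0.4975 ^ 2) ^ 2) := by
    have : c ^ 2 - 0.4975 ^ 2 = (c - 0.4975) * (c + 0.4975) := by ring
    rw [this]; field_simp; ring
  have e2 : 0.0043 / (0.995 * (c - 0.4975)) - 0.0043 / (0.995 * (c + 0.4975))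
      = 0.0043 * (1 / (c ^ 2 - 0.4975 ^ 2)) := by
    have : c ^ 2 - 0.4975 ^ 2 = (c - 0.4975) * (c + 0.4975) := by ring
    rw [this]; field_simp; ring
  have i1 : 1 / c ^ 3 ≤ c / (c ^ 2 - 0.4975 ^ 2) ^ 2 := by
    rw [div_le_div_iff₀ (by positivity) (by positivity)]
    have : (c ^ 2 - 0.4975 ^ 2) ^ 2 ≤ (c ^ 2) ^ 2 := by gcongr; nlinarith
    nlinarith
  have i2 : 1 / c ^ 2 ≤ 1 / (c ^ 2 - 0.4975 ^ 2) := by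
    apply one_div_le_one_div_of_le hsq; nlinarith
  have e3 : (0.03226 : ℝ) / c ^ 3 = 0.03226 * (1 / c ^ 3) := by ring
  have e4 : (0.0043 : ℝ) / c ^ 2 = 0.0043 * (1 / c ^ 2) := by ring
  rw [e3, e4]
  linarith

lemma hB_nonneg (u : ℝ) (hu : 0 ≤ u) : 0 ≤ hB u := by unfold hB; positivity
lemma fB_nonneg (u : ℝ) (hu : 0 ≤ u) : 0 ≤ fB u := by unfold fB; positivity

lemma sum_fB (d : ℝ) (hd : 0 < d) (L : ℕ) :
    ∑ n ∈ Finset.range (L + 1), fB (d + n * 0.995) ≤ BB d := by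
  have key : ∑ n ∈ Finset.range (L + 1), fB (d + n * 0.995) ≤
      fB d + hB (d + 0.4975) - hB (d + L * 0.995 + 0.4975) := by
    induction L with
    | zero => simp
    | succ L ih =>
      rw [Finset.sum_range_succ]
      have h := fB_tel (d + ((L + 1 : ℕ) : ℝ) * 0.995) (by push_cast; nlinarith [(Nat.cast_nonneg L : (0 : ℝ) ≤ L)])
      have e : d + ((L + 1 : ℕ) : ℝ) * 0.995 - 0.4975 = d + L * 0.995 + 0.4975 := by push_cast; ring
      rw [e] at h
      linarith
  have := hB_nonneg (d + L * 0.995 + 0.4975) (by positivity)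
  unfold BB
  linarith

lemma fB_anti (u v : ℝ) (hu : 0 < u) (h : u ≤ v) : fB v ≤ fB u := by
  unfold fB; gcongr

lemma oneSided {ι : Type*} (N : ℕ) (hN : 64 ≤ N) (s : Finset ι) (u : ι → ℝ) (d : ℝ) (hd : 0 < d)
    (hu : ∀ k ∈ s, d ≤ u k ∧ u k ≤ 0.51 * N)
    (hsep : ∀ k ∈ s, ∀ l ∈ s, k ≠ l → 0.995 ≤ |u k - u l|) :
    ∑ k ∈ s, g N (u k) ^ 3 ≤ BB d := by
  classical
  set n : ι → ℕ := fun k => ⌊(u k - d) / 0.995⌋₊ with hn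
  have hfl : ∀ k ∈ s, d + n k * 0.995 ≤ u k ∧ u k < d + n k * 0.995 + 0.995 := by
    intro k hk
    have h0 : 0 ≤ (u k - d) / 0.995 := by
      have := (hu k hk).1; apply div_nonneg <;> linarith
    have h1 := Nat.floor_le h0
    have h2 := Nat.lt_floor_add_one ((u k - d) / 0.995)
    rw [le_div_iff₀ (by norm_num)] at h1
    rw [div_lt_iff₀ (by norm_num)] at h2
    constructor
    · simp only [hn]; linarith
    · simp only [hn]; linarith
  have hinj : Set.InjOn n (s : Set ι) := by
    intro k hk l hl hkl
    by_contra hne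
    have h := hsep k hk l hl hne
    obtain ⟨a1, a2⟩ := hfl k hk
    obtain ⟨b1, b2⟩ := hfl l hl
    rw [hkl] at a1 a2
    have : |u k - u l| < 0.995 := by rw [abs_lt]; constructor <;> linarith
    linarith
  calc ∑ k ∈ s, g N (u k) ^ 3 ≤ ∑ k ∈ s, fB (d + n k * 0.995) := by
        refine Finset.sum_le_sum fun k hk => ?_
        obtain ⟨a1, a2⟩ := hfl k hk
        have hpos : 0 < d + n k * 0.995 := by positivity
        exact (g3_le N hN (u k) (by linarith) (hu k hk).2).trans (fB_anti _ _ hpos a1)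
    _ = ∑ i ∈ s.image n, fB (d + i * 0.995) := by
        rw [Finset.sum_image hinj]
    _ ≤ ∑ i ∈ Finset.range ((s.image n).sup id + 1), fB (d + i * 0.995) := by
        apply Finset.sum_le_sum_of_subset_of_nonneg
        · intro i hi
          rw [Finset.mem_range]
          exact Nat.lt_succ_of_le (Finset.le_sup (f := id) hi)
        · intro i _ _; apply fB_nonneg; positivity
    _ ≤ BB d := sum_fB d hd _

lemma g_neg (N : ℕ) (x : ℝ) : g N (-x) = g N x := by
  unfold g
  rw [show π * -x / N = -(π * x / N) by ring, Real.sin_neg, abs_neg]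

lemma twoSided {ι : Type*} (N : ℕ) (hN : 64 ≤ N) (s : Finset ι) (y W : ι → ℝ) (Φ : ℝ → ℝ)
    (da db : ℝ) (hda : 0 < da) (hdb : 0 < db)
    (hΦa : 0 ≤ Φ (GG da)) (hΦb : 0 ≤ Φ (GG db))
    (hy : ∀ k ∈ s, da ≤ y k ∨ y k ≤ -db) (hy' : ∀ k ∈ s, |y k| ≤ 0.51 * N)
    (hsep : ∀ k ∈ s, ∀ l ∈ s, k ≠ l → 0.995 ≤ |y k - y l|)
    (hW : ∀ k ∈ s, Real.sin (π * y k / N) ≠ 0 → ∀ G, g N (y k) ≤ G → W k ≤ g N (y k) ^ 3 * Φ G) :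
    ∑ k ∈ s, W k ≤ BB da * Φ (GG da) + BB db * Φ (GG db) := by
  classical
  rw [← Finset.sum_filter_add_sum_filter_not s (fun k => 0 < y k)]
  apply add_le_add
  · have h1 := oneSided N hN (s.filter (fun k => 0 < y k)) y da hda (by
      intro k hk
      rw [Finset.mem_filter] at hk
      refine ⟨?_, (le_abs_self _).trans (hy' k hk.1)⟩
      rcases hy k hk.1 with h | h
      · exact h
      · linarith [hk.2]) (by
      intro k hk l hl hkl
      exact hsep k (Finset.mem_filter.1 hk).1 l (Finset.mem_filter.1 hl).1 hkl)
    calc _ ≤ ∑ k ∈ s.filter (fun k => 0 < y k), g N (y k) ^ 3 * Φ (GG da) := by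
          refine Finset.sum_le_sum fun k hk => ?_
          rw [Finset.mem_filter] at hk
          have hle : da ≤ y k := by
            rcases hy k hk.1 with h | h
            · exact h
            · linarith [hk.2]
          have hup := (le_abs_self _).trans (hy' k hk.1)
          obtain ⟨_, _, _, h4⟩ := sinz N hN (y k) hk.2 hup
          refine hW k hk.1 h4.ne' _ ((g_le N hN (y k) hk.2 hup).trans ?_)
          unfold GG; gcongr
      _ ≤ _ := by rw [← Finset.sum_mul]; gcongr
  · have hneg : ∀ k ∈ s.filter (fun k => ¬ 0 < y k), db ≤ - y k := by
      intro k hk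
      rw [Finset.mem_filter] at hk
      rcases hy k hk.1 with h | h
      · linarith [hk.2]
      · linarith
    have h1 := oneSided N hN (s.filter (fun k => ¬ 0 < y k)) (fun k => - y k) db hdb (by
      intro k hk
      refine ⟨hneg k hk, ?_⟩
      rw [Finset.mem_filter] at hk
      exact (neg_le_abs _).trans (hy' k hk.1)) (by
      intro k hk l hl hkl
      have := hsep k (Finset.mem_filter.1 hk).1 l (Finset.mem_filter.1 hl).1 hkl
      rw [abs_sub_comm] at this
      convert this using 2; ring)
    calc _ ≤ ∑ k ∈ s.filter (fun k => ¬ 0 < y k), g N (- y k) ^ 3 * Φ (GG db) := by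
          refine Finset.sum_le_sum fun k hk => ?_
          have hle := hneg k hk
          rw [Finset.mem_filter] at hk
          have hup := (neg_le_abs _).trans (hy' k hk.1)
          obtain ⟨_, _, _, h4⟩ := sinz N hN (- y k) (by linarith) hup
          rw [g_neg]
          refine hW k hk.1 ?_ _ ?_
          · rw [show π * -y k / N = -(π * y k / N) by ring, Real.sin_neg] at h4
            linarith
          · rw [← g_neg]
            refine (g_le N hN (- y k) (by linarith) hup).trans ?_
            unfold GG; gcongr
      _ ≤ _ := by rw [← Finset.sum_mul]; gcongr

end
end SR

namespace SR
noncomputable section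

lemma K0_per (N : ℕ) (hN : 0 < N) (n : ℤ) (x : ℝ) : K0 N (x + n * N) = K0 N x := by
  have hN' : (N : ℝ) ≠ 0 := by positivity
  have key : ∀ k : ℕ, Real.cos (th N k * (x + n * N)) =
      (-1 : ℝ) ^ (n * ((N : ℤ) - 1)) * Real.cos (th N k * x) := by
    intro k
    have e : th N k * (x + n * N) = th N k * x + ((n * (2 * (k : ℤ) - ((N : ℤ) - 1)) : ℤ) : ℝ) * π := by
      unfold th; push_cast; field_simp
    rw [e, Real.cos_add_int_mul_pi]
    congr 1
    have e2 : n * (2 * (k : ℤ) - ((N : ℤ) - 1)) = 2 * (n * k - n * ((N : ℤ) - 1)) + n * ((N : ℤ) - 1) := by ring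
    rw [e2, zpow_add₀ (by norm_num), zpow_mul]
    norm_num
  have hd : d0 N (x + n * N) = (-1 : ℝ) ^ (n * ((N : ℤ) - 1)) * d0 N x := by
    unfold d0
    rw [Finset.sum_congr rfl (fun k _ => key k), ← Finset.mul_sum]; ring
  unfold K0
  rw [hd, mul_pow]
  have : ((-1 : ℝ) ^ (n * ((N : ℤ) - 1))) ^ 4 = 1 := by
    rcases Int.even_or_odd (n * ((N : ℤ) - 1)) with h | h
    · rw [h.neg_one_zpow]; norm_num
    · rw [h.neg_one_zpow]; norm_num
  rw [this, one_mul]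

lemma s0_per (N : ℕ) (hN : 0 < N) (n : ℤ) (x : ℝ) : s0 N (x + n * N) = s0 N x := by
  have hN' : (N : ℝ) ≠ 0 := by positivity
  unfold s0
  have e : 2 * π / N * (x + n * N) = 2 * π / N * x + n * (2 * π) := by field_simp
  rw [e, Real.sin_add_int_mul_two_pi]

lemma F0_per (N : ℕ) (hN : 0 < N) (n : ℤ) (α β : ℂ) (x : ℝ) : F0 N α β (x + n * N) = F0 N α β x := by
  unfold F0; rw [K0_per N hN, s0_per N hN]

lemma F1_per (N : ℕ) (hN : 0 < N) (n : ℤ) (α β : ℂ) (x : ℝ) : F1 N α β (x + n * N) = F1 N α β x := by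
  have h := (hasDeriv_F0 N hN α β (x + n * N)).comp_add_const x (n * N)
  have e : (fun x => F0 N α β (x + n * N)) = F0 N α β := funext (F0_per N hN n α β)
  rw [e] at h
  exact h.unique (hasDeriv_F0 N hN α β x)

lemma F2_per (N : ℕ) (hN : 0 < N) (n : ℤ) (α β : ℂ) (x : ℝ) : F2 N α β (x + n * N) = F2 N α β x := by
  have h := (hasDeriv_F1 N hN α β (x + n * N)).comp_add_const x (n * N)
  have e : (fun x => F1 N α β (x + n * N)) = F1 N α β := funext (F1_per N hN n α β)
  rw [e] at h
  exact h.unique (hasDeriv_F1 N hN α β x)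

lemma exists_red (N : ℕ) (hN : 0 < N) (x : ℝ) : ∃ n : ℤ, |x - n * N| ≤ N / 2 := by
  have hN' : (0 : ℝ) < N := by positivity
  refine ⟨round (x / N), ?_⟩
  have h := abs_sub_round (x / N)
  have e : x - round (x / N) * N = (x / N - round (x / N)) * N := by field_simp
  rw [e, abs_mul, abs_of_pos hN']
  nlinarith

/-- Separation of scaled nodes. -/
def Sep (N : ℕ) {S : ℕ} (X : Fin S → ℝ) : Prop :=
  ∀ j k, j ≠ k → ∀ n : ℤ, 0.995 ≤ |X j - X k - n * N|

lemma near_sum (N : ℕ) (hN : 64 ≤ N) {S : ℕ} (X : Fin S → ℝ) (hX : Sep N X) (j : Fin S) (ξ : ℝ)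
    (hξ : |ξ| ≤ 0.5) (W : Fin S → ℝ → ℝ) (hper : ∀ k (n : ℤ) x, W k (x + n * N) = W k x)
    (Φ : ℝ → ℝ) (da db : ℝ) (hda : 0 < da) (hdb : 0 < db) (hda' : da ≤ 0.995 + ξ) (hdb' : db ≤ 0.995 - ξ)
    (hΦa : 0 ≤ Φ (GG da)) (hΦb : 0 ≤ Φ (GG db))
    (hW : ∀ k x, Real.sin (π * x / N) ≠ 0 → ∀ G, g N x ≤ G → W k x ≤ g N x ^ 3 * Φ G) :
    ∑ k ∈ Finset.univ.erase j, W k (X j + ξ - X k) ≤ BB da * Φ (GG da) + BB db * Φ (GG db) := by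
  have hN' : (64 : ℝ) ≤ N := by exact_mod_cast hN
  choose n hn using fun k => exists_red N (by omega) (X k - X j)
  have e : ∀ k, W k (X j + ξ - X k) = W k (ξ - (X k - X j - n k * N)) := by
    intro k
    rw [← hper k (-n k) (ξ - (X k - X j - n k * N))]
    congr 1; push_cast; ring
  rw [Finset.sum_congr rfl (fun k _ => e k)]
  apply twoSided N hN _ (fun k => ξ - (X k - X j - n k * N)) _ Φ da db hda hdb hΦa hΦb
  · intro k hk
    have := hX k j (Finset.ne_of_mem_erase hk) (n k)
    rcases le_abs.1 this with h | h
    · right; linarith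
    · left; linarith
  · intro k hk
    calc |ξ - (X k - X j - n k * N)| ≤ |ξ| + |X k - X j - n k * N| := abs_sub _ _
      _ ≤ 0.51 * N := by linarith [hn k]
  · intro k hk l hl hkl
    have := hX l k hkl.symm (n l - n k)
    convert this using 2; push_cast; ring
  · intro k hk
    exact hW k _

lemma far_sum (N : ℕ) (hN : 64 ≤ N) {S : ℕ} (X : Fin S → ℝ) (hX : Sep N X) (x : ℝ)
    (hx : ∀ k (n : ℤ), 0.5 ≤ |x - X k - n * N|) (W : Fin S → ℝ → ℝ) (hper : ∀ k (n : ℤ) x, W k (x + n * N) = W k x)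
    (Φ : ℝ → ℝ) (hΦa : 0 ≤ Φ (GG 0.5))
    (hW : ∀ k x, Real.sin (π * x / N) ≠ 0 → ∀ G, g N x ≤ G → W k x ≤ g N x ^ 3 * Φ G) :
    ∑ k, W k (x - X k) ≤ BB 0.5 * Φ (GG 0.5) + BB 0.5 * Φ (GG 0.5) := by
  have hN' : (64 : ℝ) ≤ N := by exact_mod_cast hN
  choose n hn using fun k => exists_red N (by omega) (x - X k)
  have e : ∀ k, W k (x - X k) = W k (x - X k - n k * N) := by
    intro k
    rw [← hper k (-n k) (x - X k)]
    congr 1; push_cast; ring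
  rw [Finset.sum_congr rfl (fun k _ => e k)]
  apply twoSided N hN _ (fun k => x - X k - n k * N) _ Φ 0.5 0.5 (by norm_num) (by norm_num) hΦa hΦa
  · intro k hk
    rcases le_abs.1 (hx k (n k)) with h | h
    · left; linarith
    · right; linarith
  · intro k hk; linarith [hn k]
  · intro k hk l hl hkl
    have := hX l k hkl.symm (n k - n l)
    convert this using 2; push_cast; ring
  · intro k hk
    exact hW k _

/-- the interpolant and its derivatives -/
def p0 (N : ℕ) {S : ℕ} (X : Fin S → ℝ) (α β : Fin S → ℂ) (x : ℝ) : ℂ := ∑ k, F0 N (α k) (β k) (x - X k)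
def p1 (N : ℕ) {S : ℕ} (X : Fin S → ℝ) (α β : Fin S → ℂ) (x : ℝ) : ℂ := ∑ k, F1 N (α k) (β k) (x - X k)

lemma F0_zero (N : ℕ) (hN : 0 < N) (α β : ℂ) : F0 N α β 0 = α := by
  simp [F0, K0, s0, d0_zero N hN]
lemma F1_zero (N : ℕ) (hN : 0 < N) (α β : ℂ) : F1 N α β 0 = β := by
  simp [F1, K0, K1, s0, s1, d0_zero N hN, d1_zero]

lemma BB995 : BB 0.995 ≤ 0.0477 := by unfold BB fB hB; norm_num
lemma GG995 : GG 0.995 ≤ 0.32723 := by unfold GG; norm_num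
lemma BB_nonneg (d : ℝ) (hd : 0 < d) : 0 ≤ BB d := by
  unfold BB; exact add_nonneg (fB_nonneg _ hd.le) (hB_nonneg _ (by linarith))
lemma GG_nonneg (d : ℝ) (hd : 0 < d) : 0 ≤ GG d := by unfold GG; positivity

lemma Ph0_nonneg (a b G : ℝ) (ha : 0 ≤ a) (hb : 0 ≤ b) (hG : 0 ≤ G) : 0 ≤ Ph0 a b G := by unfold Ph0; positivity
lemma Ph1_nonneg (a b G : ℝ) (ha : 0 ≤ a) (hb : 0 ≤ b) (hG : 0 ≤ G) : 0 ≤ Ph1 a b G := by unfold Ph1; positivity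
lemma Ph2_nonneg (a b G : ℝ) (ha : 0 ≤ a) (hb : 0 ≤ b) (hG : 0 ≤ G) : 0 ≤ Ph2 a b G := by unfold Ph2; positivity

lemma off_bounds (N : ℕ) (hN : 64 ≤ N) {S : ℕ} (X : Fin S → ℝ) (hX : Sep N X) (α β : Fin S → ℂ) (a b : ℝ)
    (ha : 0 ≤ a) (hb : 0 ≤ b) (hα : ∀ k, ‖α k‖ ≤ a) (hβ : ∀ k, ‖β k‖ ≤ b) (j : Fin S) :
    ‖p0 N X α β (X j) - α j‖ ≤ 0.0313 * a + 0.0304 * b ∧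
    ‖p1 N X α β (X j) - β j‖ ≤ 0.2560 * a + 0.281 * b := by
  have hN0 : 0 < N := by omega
  have hG0 := GG_nonneg 0.995 (by norm_num)
  have hB0 := BB_nonneg 0.995 (by norm_num)
  have hG := GG995
  have hB := BB995
  constructor
  · have h := near_sum N hN X hX j 0 (by norm_num) (fun k x => ‖F0 N (α k) (β k) x‖)
      (fun k n x => by simp only [F0_per N hN0]) (Ph0 a b) 0.995 0.995 (by norm_num) (by norm_num)
      (by norm_num) (by norm_num) (Ph0_nonneg _ _ _ ha hb hG0) (Ph0_nonneg _ _ _ ha hb hG0)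
      (fun k x hs G hG => F0_bd N hN x hs _ _ a b G (hα k) (hβ k) hG)
    unfold p0
    rw [← Finset.add_sum_erase _ _ (Finset.mem_univ j), sub_self, F0_zero N hN0, add_sub_cancel_left]
    refine (norm_sum_le _ _).trans ?_
    simp only [add_zero] at h
    refine h.trans ?_
    have : BB 0.995 * Ph0 a b (GG 0.995) ≤ 0.0477 * Ph0 a b 0.32723 := by
      unfold Ph0; gcongr
    unfold Ph0 at this ⊢
    linarith
  · have h := near_sum N hN X hX j 0 (by norm_num) (fun k x => ‖F1 N (α k) (β k) x‖)
      (fun k n x => by simp only [F1_per N hN0]) (Ph1 a b) 0.995 0.995 (by norm_num) (by norm_num)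
      (by norm_num) (by norm_num) (Ph1_nonneg _ _ _ ha hb hG0) (Ph1_nonneg _ _ _ ha hb hG0)
      (fun k x hs G hG => F1_bd N hN x hs _ _ a b G (hα k) (hβ k) hG)
    unfold p1
    rw [← Finset.add_sum_erase _ _ (Finset.mem_univ j), sub_self, F1_zero N hN0, add_sub_cancel_left]
    refine (norm_sum_le _ _).trans ?_
    simp only [add_zero] at h
    refine h.trans ?_
    have : BB 0.995 * Ph1 a b (GG 0.995) ≤ 0.0477 * Ph1 a b 0.32723 := by
      unfold Ph1; gcongr
    unfold Ph1 at this ⊢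
    linarith

lemma apriori (N : ℕ) (hN : 64 ≤ N) {S : ℕ} (X : Fin S → ℝ) (hX : Sep N X) (α β : Fin S → ℂ) (V : ℝ) (hV : 0 ≤ V)
    (h0 : ∀ j, ‖p0 N X α β (X j)‖ ≤ V) (h1 : ∀ j, p1 N X α β (X j) = 0) :
    ‖α‖ ≤ 1.0445 * V ∧ ‖β‖ ≤ 0.372 * V := by
  have hb := off_bounds N hN X hX α β ‖α‖ ‖β‖ (norm_nonneg _) (norm_nonneg _) (norm_le_pi_norm α) (norm_le_pi_norm β)
  have na := norm_nonneg α
  have nb := norm_nonneg β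
  have h2 : ‖α‖ ≤ V + (0.0313 * ‖α‖ + 0.0304 * ‖β‖) := by
    refine (pi_norm_le_iff_of_nonneg (by positivity)).2 fun j => ?_
    have e : α j = p0 N X α β (X j) - (p0 N X α β (X j) - α j) := by ring
    rw [e]
    exact (norm_sub_le _ _).trans (add_le_add (h0 j) (hb j).1)
  have h3 : ‖β‖ ≤ (0.2560 * ‖α‖ + 0.281 * ‖β‖) := by
    refine (pi_norm_le_iff_of_nonneg (by positivity)).2 fun j => ?_
    have := (hb j).2
    rwa [h1 j, zero_sub, norm_neg] at this
  constructor <;> linarith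

lemma exists_coeffs (N : ℕ) (hN : 64 ≤ N) {S : ℕ} (X : Fin S → ℝ) (hX : Sep N X) (v : Fin S → ℂ) :
    ∃ α β : Fin S → ℂ, (∀ j, p0 N X α β (X j) = v j) ∧ ∀ j, p1 N X α β (X j) = 0 := by
  let L : ((Fin S → ℂ) × (Fin S → ℂ)) →ₗ[ℂ] ((Fin S → ℂ) × (Fin S → ℂ)) :=
    { toFun := fun q => (fun j => p0 N X q.1 q.2 (X j), fun j => p1 N X q.1 q.2 (X j))
      map_add' := by
        intro q r
        ext j
        · simp only [p0, F0, Prod.fst_add, Prod.snd_add, Pi.add_apply]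
          rw [← Finset.sum_add_distrib]; exact Finset.sum_congr rfl fun k _ => by ring
        · simp only [p1, F1, Prod.fst_add, Prod.snd_add, Pi.add_apply]
          rw [← Finset.sum_add_distrib]; exact Finset.sum_congr rfl fun k _ => by ring
      map_smul' := by
        intro c q
        ext j
        · simp only [p0, F0, Prod.smul_fst, Prod.smul_snd, Pi.smul_apply, smul_eq_mul, RingHom.id_apply]
          rw [Finset.mul_sum]; exact Finset.sum_congr rfl fun k _ => by ring
        · simp only [p1, F1, Prod.smul_fst, Prod.smul_snd, Pi.smul_apply, smul_eq_mul, RingHom.id_apply]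
          rw [Finset.mul_sum]; exact Finset.sum_congr rfl fun k _ => by ring }
  have hinj : Function.Injective L := by
    rw [← LinearMap.ker_eq_bot, LinearMap.ker_eq_bot']
    intro q hq
    have e0 : ∀ j, p0 N X q.1 q.2 (X j) = 0 := fun j => congrFun (congrArg Prod.fst hq) j
    have e1 : ∀ j, p1 N X q.1 q.2 (X j) = 0 := fun j => congrFun (congrArg Prod.snd hq) j
    obtain ⟨h1, h2⟩ := apriori N hN X hX q.1 q.2 0 le_rfl (fun j => by rw [e0 j, norm_zero]) e1
    simp only [mul_zero, norm_le_zero_iff] at h1 h2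
    exact Prod.ext h1 h2
  obtain ⟨q, hq⟩ := (LinearMap.injective_iff_surjective.1 hinj) (v, 0)
  exact ⟨q.1, q.2, fun j => congrFun (congrArg Prod.fst hq) j, fun j => congrFun (congrArg Prod.snd hq) j⟩

end
end SR

namespace SR
noncomputable section

lemma le_of_deriv (f f' : ℝ → ℝ) (hf : ∀ x, HasDerivAt f (f' x) x) (h0 : 0 ≤ f 0) (h : ∀ x, 0 ≤ x → 0 ≤ f' x)
    (x : ℝ) (hx : 0 ≤ x) : 0 ≤ f x := by
  have hm : MonotoneOn f (Set.Ici 0) := by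
    apply monotoneOn_of_deriv_nonneg (convex_Ici 0)
    · exact fun x _ => (hf x).continuousAt.continuousWithinAt
    · exact fun x _ => (hf x).differentiableAt.differentiableWithinAt
    · intro x hx
      rw [interior_Ici] at hx
      rw [(hf x).deriv]; exact h x (le_of_lt hx)
  exact h0.trans (hm (Set.self_mem_Ici) hx hx)

lemma sin_up (x : ℝ) (hx : 0 ≤ x) : Real.sin x ≤ x - x ^ 3 / 6 + x ^ 5 / 120 := by
  have hc : ∀ x : ℝ, 0 ≤ x → 0 ≤ 1 - x ^ 2 / 2 + x ^ 4 / 24 - Real.cos x := by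
    refine le_of_deriv _ (fun x => - x + x ^ 3 / 6 + Real.sin x) ?_ ?_ ?_
    · intro x
      have := (((((hasDerivAt_id x).pow 2).div_const 2).const_sub 1).add (((hasDerivAt_id x).pow 4).div_const 24)).sub
        (Real.hasDerivAt_cos x)
      exact this.congr_deriv (by simp; ring)
    · simp
    · intro x hx
      have := Real.sin_ge_sub_cube hx
      linarith
  have := le_of_deriv (fun x => x - x ^ 3 / 6 + x ^ 5 / 120 - Real.sin x) (fun x => 1 - x ^ 2 / 2 + x ^ 4 / 24 - Real.cos x) ?_ ?_ hc x hx
  · linarith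
  · intro x
    have := (((hasDerivAt_id x).sub (((hasDerivAt_id x).pow 3).div_const 6)).add (((hasDerivAt_id x).pow 5).div_const 120)).sub
        (Real.hasDerivAt_sin x)
    exact this.congr_deriv (by simp; ring)
  · simp

lemma d0_neg (N : ℕ) (x : ℝ) : d0 N (-x) = d0 N x := by
  unfold d0; simp [mul_neg, Real.cos_neg]

lemma d0_abs (N : ℕ) (x : ℝ) : d0 N |x| = d0 N x := by
  rcases abs_choice x with h | h <;> rw [h]
  exact d0_neg N x

lemma d0_pos_bounds (N : ℕ) (hN : 64 ≤ N) (x : ℝ) (hx0 : 0 < x) (hx : x ≤ 0.5) :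
    0 ≤ d0 N x ∧ d0 N x ≤ 1 - 0.145 * (π * x) ^ 2 := by
  have hN' : (64 : ℝ) ≤ N := by exact_mod_cast hN
  have hN0 : (0 : ℝ) < N := by linarith
  have hpi := Real.pi_pos
  have hpi2 := Real.pi_lt_d4
  have h := I0 N (by omega) x
  set z := π * x with hz
  have hz0 : 0 < z := by positivity
  have hz1 : z ≤ 1.5709 := by rw [hz]; nlinarith
  have hz2 : z ^ 2 ≤ 2.468 := by nlinarith
  set w := z / N with hw
  have hw0 : 0 < w := by positivity
  have hzw : z = N * w := by rw [hw]; field_simp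
  have hs1 := Real.sin_ge_sub_cube hw0.le
  have hs2 := sin_up z hz0.le
  have hw2 : w ^ 2 ≤ z ^ 2 / 4096 := by
    rw [hw, div_pow]
    apply div_le_div_of_nonneg_left (by positivity) (by norm_num)
    nlinarith
  have hsw : N * Real.sin w ≥ z * (1 - 0.00005 * z ^ 2) := by
    have : (N : ℝ) * (w - w ^ 3 / 6) ≤ N * Real.sin w := by gcongr
    have e : (N : ℝ) * (w - w ^ 3 / 6) = z * (1 - w ^ 2 / 6) := by rw [hzw]; ring
    rw [e] at this
    have : z * (1 - 0.00005 * z ^ 2) ≤ z * (1 - w ^ 2 / 6) := by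
      gcongr; nlinarith
    linarith
  have hpos : 0 < z * (1 - 0.00005 * z ^ 2) := by
    apply mul_pos hz0; nlinarith
  have hsin : 0 ≤ Real.sin z := Real.sin_nonneg_of_nonneg_of_le_pi hz0.le (by linarith [Real.pi_gt_three])
  have hd : 0 ≤ d0 N x := by
    by_contra hc
    push Not at hc
    have : N * Real.sin w * d0 N x < 0 := mul_neg_of_pos_of_neg (by linarith) hc
    linarith
  refine ⟨hd, ?_⟩
  by_contra hc
  push Not at hc
  have hy : 0 ≤ 1 - 0.145 * z ^ 2 := by nlinarith
  have h1 : z * (1 - 0.00005 * z ^ 2) * (1 - 0.145 * z ^ 2) < N * Real.sin w * d0 N x := by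
    calc _ < z * (1 - 0.00005 * z ^ 2) * d0 N x := by gcongr
      _ ≤ _ := by gcongr
  rw [h] at h1
  have h2 : z * (1 - z ^ 2 / 6 + z ^ 4 / 120) ≤ z * ((1 - 0.00005 * z ^ 2) * (1 - 0.145 * z ^ 2)) := by
    gcongr
    have : z ^ 2 * (z^2 * (1/120 - 0.00005 * 0.145)) ≤ z ^ 2 * (1/6 - 0.00005 - 0.145) := by
      gcongr; nlinarith
    nlinarith
  nlinarith

lemma d0_bounds (N : ℕ) (hN : 64 ≤ N) (x : ℝ) (hx : |x| ≤ 0.5) :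
    0 ≤ d0 N x ∧ d0 N x ≤ 1 - 0.145 * (π * x) ^ 2 := by
  rcases eq_or_ne x 0 with rfl | h0
  · rw [d0_zero N (by omega)]; norm_num
  · have := d0_pos_bounds N hN |x| (abs_pos.mpr h0) hx
    rw [d0_abs, mul_pow, sq_abs, ← mul_pow] at this
    exact this

lemma d0_lower (N : ℕ) (hN : 0 < N) (x : ℝ) : 1 - (π * x) ^ 2 / 2 ≤ d0 N x := by
  have hN0 : (0 : ℝ) < N := by positivity
  have hpi := Real.pi_pos
  have h : ∑ k ∈ Finset.range N, (1 - (π * x) ^ 2 / 2) ≤ ∑ k ∈ Finset.range N, Real.cos (th N k * x) := by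
    refine Finset.sum_le_sum fun k hk => ?_
    have hk' : (k : ℝ) + 1 ≤ N := by exact_mod_cast Finset.mem_range.1 hk
    have hk0 : (0 : ℝ) ≤ k := by positivity
    have ht : (th N k) ^ 2 ≤ π ^ 2 := by
      unfold th
      rw [sq_le_sq, abs_div, abs_mul, abs_of_pos hpi, abs_of_pos hN0, div_le_iff₀ hN0]
      gcongr
      rw [abs_le]; constructor <;> linarith
    have := Real.one_sub_sq_div_two_le_cos (x := th N k * x)
    refine le_trans ?_ this
    rw [mul_pow, mul_pow]
    have := mul_le_mul_of_nonneg_right ht (sq_nonneg x)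
    linarith
  unfold d0
  rw [Finset.sum_const, Finset.card_range, nsmul_eq_mul] at h
  rw [one_div, ← div_eq_inv_mul, le_div_iff₀ hN0]
  linarith

lemma s0_le (N : ℕ) (hN : 0 < N) (x : ℝ) : |s0 N x| ≤ |x| := by
  have hN0 : (0 : ℝ) < N := by positivity
  have hpi := Real.pi_pos
  unfold s0
  rw [abs_mul, abs_of_pos (by positivity)]
  have hc : (0 : ℝ) < 2 * π / N := by positivity
  have this : |Real.sin (2 * π / N * x)| ≤ 2 * π / N * |x| := by
    have h := Real.abs_sin_le_abs (x := 2 * π / N * x)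
    rwa [abs_mul (2 * π / N), abs_of_pos hc] at h
  calc N / (2 * π) * |Real.sin (2 * π / N * x)| ≤ N / (2 * π) * (2 * π / N * |x|) := by gcongr
    _ = |x| := by field_simp

lemma s2_le (N : ℕ) (hN : 64 ≤ N) (x : ℝ) (hx : |x| ≤ 0.2) : |s2 N x| ≤ 0.002 := by
  have hN' : (64 : ℝ) ≤ N := by exact_mod_cast hN
  have hN0 : (0 : ℝ) < N := by linarith
  have hpi0 := Real.pi_pos
  have hpi : π ^ 2 ≤ 9.8697 := by nlinarith [Real.pi_lt_d6]
  have e : s2 N x = -(4 * π ^ 2 / N ^ 2) * s0 N x := by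
    unfold s2 s0; field_simp; ring
  rw [e, abs_mul, abs_neg, abs_of_pos (by positivity : (0 : ℝ) < 4 * π ^ 2 / N ^ 2)]
  have h2 : 4 * π ^ 2 / (N : ℝ) ^ 2 ≤ 0.00964 := by
    rw [div_le_iff₀ (by positivity)]; nlinarith
  calc 4 * π ^ 2 / (N : ℝ) ^ 2 * |s0 N x| ≤ 0.00964 * 0.2 := by
        gcongr; exact (s0_le N (by omega) x).trans hx
    _ ≤ _ := by norm_num

lemma taylor_pos (f f1 f2 : ℝ → ℂ) (h1 : ∀ x, HasDerivAt f (f1 x) x) (h2 : ∀ x, HasDerivAt f1 (f2 x) x)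
    (h0 : f1 0 = 0) (M r : ℝ) (hM : ∀ t, 0 ≤ t → t ≤ r → ‖f2 t‖ ≤ M) (t : ℝ) (ht : 0 ≤ t) (htr : t ≤ r) :
    ‖f t - f 0‖ ≤ M / 2 * t ^ 2 := by
  have a1 : ∀ s ∈ Set.Icc 0 r, ‖f1 s‖ ≤ M * s := by
    intro s hs
    have := norm_image_sub_le_of_norm_deriv_right_le_segment (f := f1) (f' := f2) (a := 0) (b := r) (C := M)
      (fun x _ => (h2 x).continuousAt.continuousWithinAt) (fun x _ => (h2 x).hasDerivWithinAt)
      (fun x hx => hM x hx.1 hx.2.le) s hs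
    simpa [h0] using this
  refine image_norm_le_of_norm_deriv_right_le_deriv_boundary (f := fun t => f t - f 0) (f' := f1)
    (a := 0) (b := r) (B := fun t => M / 2 * t ^ 2) (B' := fun t => M * t) ?_ ?_ ?_ ?_ ?_ (x := t) ⟨ht, htr⟩
  · exact fun x _ => ((h1 x).sub_const _).continuousAt.continuousWithinAt
  · exact fun x _ => ((h1 x).sub_const _).hasDerivWithinAt
  · simp
  · intro x
    have := ((hasDerivAt_id x).pow 2).const_mul (M / 2)
    exact this.congr_deriv (by simp; ring)
  · exact fun x hx => a1 x ⟨hx.1, hx.2.le⟩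

lemma taylor (f f1 f2 : ℝ → ℂ) (h1 : ∀ x, HasDerivAt f (f1 x) x) (h2 : ∀ x, HasDerivAt f1 (f2 x) x)
    (h0 : f1 0 = 0) (M r : ℝ) (hM : ∀ t, |t| ≤ r → ‖f2 t‖ ≤ M) (t : ℝ) (ht : |t| ≤ r) :
    ‖f t - f 0‖ ≤ M / 2 * t ^ 2 := by
  rcases le_total 0 t with h | h
  · exact taylor_pos f f1 f2 h1 h2 h0 M r (fun s hs hr => hM s (by rwa [abs_of_nonneg hs])) t h
      (by rwa [abs_of_nonneg h] at ht)
  · have := taylor_pos (fun s => f (-s)) (fun s => - f1 (-s)) (fun s => f2 (-s))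
      (fun x => ((h1 (-x)).scomp x (hasDerivAt_neg x)).congr_deriv (by simp))
      (fun x => (((h2 (-x)).scomp x (hasDerivAt_neg x)).neg).congr_deriv (by simp))
      (by simp [h0]) M r (fun s hs hr => hM (-s) (by rwa [abs_neg, abs_of_nonneg hs])) (-t) (by linarith)
      (by rwa [abs_of_nonpos h] at ht)
    simpa using this

lemma ph2sum : BB 0.795 * Ph2 1.0445 0.372 (GG 0.795) + BB 0.995 * Ph2 1.0445 0.372 (GG 0.995) ≤ 7.938 := by
  unfold BB fB hB GG Ph2; norm_num

/-- near-zone expansion -/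
lemma near_T (N : ℕ) (hN : 64 ≤ N) {S : ℕ} (X : Fin S → ℝ) (hX : Sep N X) (α β : Fin S → ℂ)
    (hα : ∀ k, ‖α k‖ ≤ 1.0445) (hβ : ∀ k, ‖β k‖ ≤ 0.372) (j : Fin S) (h1 : p1 N X α β (X j) = 0)
    (ξ : ℝ) (hξ : |ξ| ≤ 0.2) :
    ‖p0 N X α β (X j + ξ) - p0 N X α β (X j) + (1 - (K0 N ξ : ℂ)) * (α j + β j * (s0 N ξ : ℂ))‖ ≤ 3.97 * ξ ^ 2 := by
  have hN0 : 0 < N := by omega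
  have key := taylor (fun t => (∑ k ∈ Finset.univ.erase j, F0 N (α k) (β k) (X j + t - X k)) + β j * (s0 N t : ℂ))
    (fun t => (∑ k ∈ Finset.univ.erase j, F1 N (α k) (β k) (X j + t - X k)) + β j * (s1 N t : ℂ))
    (fun t => (∑ k ∈ Finset.univ.erase j, F2 N (α k) (β k) (X j + t - X k)) + β j * (s2 N t : ℂ))
    ?_ ?_ ?_ 7.94 0.2 ?_ ξ hξ
  · have e : p0 N X α β (X j + ξ) - p0 N X α β (X j) + (1 - (K0 N ξ : ℂ)) * (α j + β j * (s0 N ξ : ℂ)) =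
       ((∑ k ∈ Finset.univ.erase j, F0 N (α k) (β k) (X j + ξ - X k)) + β j * (s0 N ξ : ℂ)) -
       ((∑ k ∈ Finset.univ.erase j, F0 N (α k) (β k) (X j + 0 - X k)) + β j * (s0 N 0 : ℂ)) := by
      unfold p0
      rw [← Finset.add_sum_erase _ _ (Finset.mem_univ j), ← Finset.add_sum_erase _ _ (Finset.mem_univ j)]
      rw [sub_self, F0_zero N hN0, show X j + ξ - X j = ξ by ring, add_zero]
      have : s0 N 0 = 0 := by simp [s0]
      rw [this]
      unfold F0
      push_cast
      ring
    rw [e]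
    refine key.trans (le_of_eq ?_)
    norm_num
  · intro x
    refine HasDerivAt.add (HasDerivAt.fun_sum fun k _ => ?_) ((hasDeriv_s0 N hN0 x).ofReal_comp.const_mul _)
    have := (hasDeriv_F0 N hN0 (α k) (β k) (X j + x - X k)).scomp x
      (((hasDerivAt_id x).const_add (X j)).sub_const (X k))
    rw [one_smul] at this
    exact this
  · intro x
    refine HasDerivAt.add (HasDerivAt.fun_sum fun k _ => ?_) ((hasDeriv_s1 N hN0 x).ofReal_comp.const_mul _)
    have := (hasDeriv_F1 N hN0 (α k) (β k) (X j + x - X k)).scomp x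
      (((hasDerivAt_id x).const_add (X j)).sub_const (X k))
    rw [one_smul] at this
    exact this
  · unfold p1 at h1
    rw [← Finset.add_sum_erase _ _ (Finset.mem_univ j), sub_self, F1_zero N hN0] at h1
    simp only [add_zero]
    have : s1 N 0 = 1 := by simp [s1]
    rw [this]
    push_cast
    rw [← h1]; ring
  · intro t ht
    have hG : ∀ d : ℝ, 0 < d → 0 ≤ Ph2 1.0445 0.372 (GG d) := fun d hd =>
      Ph2_nonneg _ _ _ (by norm_num) (by norm_num) (GG_nonneg d hd)
    have hs : ‖∑ k ∈ Finset.univ.erase j, F2 N (α k) (β k) (X j + t - X k)‖ ≤ 7.938 := by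
      refine (norm_sum_le _ _).trans ?_
      have hl := abs_le.1 ht
      rcases le_total 0 t with h | h
      · refine (near_sum N hN X hX j t (by linarith) (fun k x => ‖F2 N (α k) (β k) x‖)
          (fun k n x => by simp only [F2_per N hN0]) (Ph2 1.0445 0.372) 0.995 0.795 (by norm_num) (by norm_num)
          (by linarith) (by linarith) (hG _ (by norm_num)) (hG _ (by norm_num))
          (fun k x hs G hG => F2_bd N hN x hs _ _ _ _ G (hα k) (hβ k) hG)).trans ?_
        linarith [ph2sum]
      · refine (near_sum N hN X hX j t (by linarith) (fun k x => ‖F2 N (α k) (β k) x‖)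
          (fun k n x => by simp only [F2_per N hN0]) (Ph2 1.0445 0.372) 0.795 0.995 (by norm_num) (by norm_num)
          (by linarith) (by linarith) (hG _ (by norm_num)) (hG _ (by norm_num))
          (fun k x hs G hG => F2_bd N hN x hs _ _ _ _ G (hα k) (hβ k) hG)).trans ?_
        linarith [ph2sum]
    have hs2 : ‖β j * (s2 N t : ℂ)‖ ≤ 0.372 * 0.002 := by
      rw [norm_mul, Complex.norm_real, Real.norm_eq_abs]
      gcongr
      · exact hβ j
      · exact s2_le N hN t ht
    refine (norm_add_le _ _).trans ?_
    linarith

lemma val_sum (N : ℕ) (hN : 64 ≤ N) {S : ℕ} (X : Fin S → ℝ) (hX : Sep N X) (α β : Fin S → ℂ)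
    (hα : ∀ k, ‖α k‖ ≤ 1.0445) (hβ : ∀ k, ‖β k‖ ≤ 0.372) (j : Fin S) (lo hi V : ℝ) (hlo : 0 ≤ lo) (hhi : hi ≤ 0.5)
    (ξ : ℝ) (h1 : lo ≤ |ξ|) (h2 : |ξ| ≤ hi)
    (hV : (1 - 0.145 * (9.8695 * lo ^ 2)) ^ 4 * (1.0445 + 0.372 * hi) +
      (BB (0.995 - hi) * Ph0 1.0445 0.372 (GG (0.995 - hi)) + BB 0.995 * Ph0 1.0445 0.372 (GG 0.995)) ≤ V) :
    ‖p0 N X α β (X j + ξ)‖ ≤ V := by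
  have hN0 : 0 < N := by omega
  have hG : ∀ d : ℝ, 0 < d → 0 ≤ Ph0 1.0445 0.372 (GG d) := fun d hd =>
      Ph0_nonneg _ _ _ (by norm_num) (by norm_num) (GG_nonneg d hd)
  have hl := abs_le.1 h2
  have hs : ‖∑ k ∈ Finset.univ.erase j, F0 N (α k) (β k) (X j + ξ - X k)‖ ≤
     (BB (0.995 - hi) * Ph0 1.0445 0.372 (GG (0.995 - hi)) + BB 0.995 * Ph0 1.0445 0.372 (GG 0.995)) := by
    refine (norm_sum_le _ _).trans ?_
    rcases le_total 0 ξ with h | h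
    · refine (near_sum N hN X hX j ξ (by linarith) (fun k x => ‖F0 N (α k) (β k) x‖)
          (fun k n x => by simp only [F0_per N hN0]) (Ph0 1.0445 0.372) 0.995 (0.995 - hi) (by norm_num) (by linarith)
          (by linarith) (by linarith) (hG _ (by norm_num)) (hG _ (by linarith))
          (fun k x hs G hG => F0_bd N hN x hs _ _ _ _ G (hα k) (hβ k) hG)).trans ?_
      linarith
    · refine (near_sum N hN X hX j ξ (by linarith) (fun k x => ‖F0 N (α k) (β k) x‖)
          (fun k n x => by simp only [F0_per N hN0]) (Ph0 1.0445 0.372) (0.995 - hi) 0.995 (by linarith) (by norm_num)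
          (by linarith) (by linarith) (hG _ (by linarith)) (hG _ (by norm_num))
          (fun k x hs G hG => F0_bd N hN x hs _ _ _ _ G (hα k) (hβ k) hG)).trans ?_
      linarith
  obtain ⟨d1, d2⟩ := d0_bounds N hN ξ (h2.trans hhi)
  have hpi : 9.8695 ≤ π ^ 2 := by nlinarith [Real.pi_gt_d6]
  have d3 : d0 N ξ ≤ 1 - 0.145 * (9.8695 * lo ^ 2) := by
    refine d2.trans ?_
    rw [mul_pow]
    have : lo ^ 2 ≤ ξ ^ 2 := by rw [← sq_abs ξ]; gcongr
    have : 9.8695 * lo ^ 2 ≤ π ^ 2 * ξ ^ 2 := by gcongr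
    linarith
  unfold p0
  rw [← Finset.add_sum_erase _ _ (Finset.mem_univ j), show X j + ξ - X j = ξ by ring]
  refine (norm_add_le _ _).trans (le_trans (add_le_add ?_ hs) hV)
  unfold F0 K0
  rw [norm_mul, Complex.norm_real, Real.norm_eq_abs, abs_of_nonneg (by positivity)]
  gcongr
  refine (norm_add_le _ _).trans (add_le_add (hα j) ?_)
  rw [norm_mul, Complex.norm_real, Real.norm_eq_abs]
  gcongr
  · exact hβ j
  · exact (s0_le N hN0 ξ).trans h2

lemma cert_scaled (N : ℕ) (hN : 64 ≤ N) {S : ℕ} (X : Fin S → ℝ) (hX : Sep N X) (v : Fin S → ℂ) (hv : ∀ j, ‖v j‖ ≤ 1) :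
    ∃ α β : Fin S → ℂ, (∀ j, p0 N X α β (X j) = v j) ∧
      (∀ j ξ, |ξ| ≤ 0.2 → ‖p0 N X α β (X j + ξ)‖ ≤ 1 - 0.5 * ξ ^ 2) ∧
      (∀ j ξ, 0.2 ≤ |ξ| → |ξ| ≤ 0.5 → ‖p0 N X α β (X j + ξ)‖ ≤ 0.98) ∧
      (∀ x, (∀ k (n : ℤ), 0.5 ≤ |x - X k - n * N|) → ‖p0 N X α β x‖ ≤ 0.98) ∧
      (∀ j ξ, |ξ| ≤ 0.2 → ‖p0 N X α β (X j + ξ) - v j‖ ≤ 40 * |ξ|) := by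
  have hN0 : 0 < N := by omega
  obtain ⟨α, β, hp, hp1⟩ := exists_coeffs N hN X hX v
  obtain ⟨na, nb⟩ := apriori N hN X hX α β 1 (by norm_num) (fun j => by rw [hp j]; exact hv j) hp1
  have hα : ∀ k, ‖α k‖ ≤ 1.0445 := fun k => (norm_le_pi_norm α k).trans (by linarith)
  have hβ : ∀ k, ‖β k‖ ≤ 0.372 := fun k => (norm_le_pi_norm β k).trans (by linarith)
  have hoff : ∀ j, ‖v j - α j‖ ≤ 0.0441 := fun j => by
    have := (off_bounds N hN X hX α β 1.0445 0.372 (by norm_num) (by norm_num) hα hβ j).1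
    rw [hp j] at this
    linarith
  have hs : ∀ j ξ, |ξ| ≤ 0.2 → ‖β j * (s0 N ξ : ℂ)‖ ≤ 0.372 * 0.2 := by
    intro j ξ hξ
    rw [norm_mul, Complex.norm_real, Real.norm_eq_abs]
    gcongr
    · exact hβ j
    · exact (s0_le N hN0 ξ).trans hξ
  have hK : ∀ ξ, |ξ| ≤ 0.2 → 0 ≤ K0 N ξ ∧ K0 N ξ ≤ 1 ∧ 5.2 * ξ ^ 2 ≤ 1 - K0 N ξ ∧ 1 - K0 N ξ ≤ 20 * ξ ^ 2 := by
    intro ξ hξ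
    obtain ⟨a1, a2⟩ := d0_bounds N hN ξ (by linarith)
    have a3 := d0_lower N hN0 ξ
    have hpi : 9.8695 ≤ π ^ 2 := by nlinarith [Real.pi_gt_d6]
    have hpi' : π ^ 2 ≤ 9.8697 := by nlinarith [Real.pi_lt_d6, Real.pi_pos]
    have hx2 : ξ ^ 2 ≤ 0.04 := by rw [← sq_abs ξ]; nlinarith [abs_nonneg ξ]
    have hx0 := sq_nonneg ξ
    rw [mul_pow] at a2 a3
    have a4 : d0 N ξ ≤ 1 - 1.431 * ξ ^ 2 := by nlinarith
    have a5 : 1 - 4.935 * ξ ^ 2 ≤ d0 N ξ := by nlinarith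
    unfold K0
    have ha1 : d0 N ξ ≤ 1 := by linarith
    have up : d0 N ξ ^ 4 ≤ (1 - 1.431 * ξ ^ 2) ^ 4 := by gcongr
    have lo : 1 - d0 N ξ ^ 4 ≤ 4 * (1 - d0 N ξ) := by
      nlinarith [sq_nonneg (1 - d0 N ξ), sq_nonneg (1 - d0 N ξ ^ 2), mul_nonneg a1 a1]
    refine ⟨by positivity, pow_le_one₀ a1 ha1, ?_, by linarith⟩
    set y := ξ ^ 2
    have : (1 - 1.431 * y) ^ 4 ≤ 1 - 5.2 * y := by
      have hsq : (1 - 1.431 * y) ^ 2 ≤ 1 - 2.78 * y := by nlinarith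
      have : ((1 - 1.431 * y) ^ 2) ^ 2 ≤ (1 - 2.78 * y) ^ 2 := by gcongr
      nlinarith
    linarith
  refine ⟨α, β, hp, ?_, ?_, ?_, ?_⟩
  · intro j ξ hξ
    have hT := near_T N hN X hX α β hα hβ j (hp1 j) ξ hξ
    obtain ⟨k0, k1, k2, k3⟩ := hK ξ hξ
    rw [hp j] at hT
    have e : p0 N X α β (X j + ξ) = (p0 N X α β (X j + ξ) - v j + (1 - (K0 N ξ : ℂ)) * (α j + β j * (s0 N ξ : ℂ)))
      + (K0 N ξ : ℂ) * v j + ((1 - K0 N ξ : ℝ) : ℂ) * ((v j - α j) - β j * (s0 N ξ : ℂ)) := by push_cast; ring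
    rw [e]
    refine (norm_add₃_le).trans ?_
    have b1 : ‖(K0 N ξ : ℂ) * v j‖ ≤ K0 N ξ := by
      rw [norm_mul, Complex.norm_real, Real.norm_eq_abs, abs_of_nonneg k0]
      nlinarith [hv j]
    have b2 : ‖((1 - K0 N ξ : ℝ) : ℂ) * ((v j - α j) - β j * (s0 N ξ : ℂ))‖ ≤ (1 - K0 N ξ) * 0.1186 := by
      rw [norm_mul, Complex.norm_real, Real.norm_eq_abs, abs_of_nonneg (by linarith)]
      gcongr
      refine (norm_sub_le _ _).trans ?_
      linarith [hoff j, hs j ξ hξ]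
    nlinarith
  · intro j ξ h1 h2
    rcases le_total |ξ| 0.25 with h | h
    · exact val_sum N hN X hX α β hα hβ j 0.2 0.25 0.98 (by norm_num) (by norm_num) ξ h1 h
        (by unfold BB fB hB GG Ph0; norm_num)
    rcases le_total |ξ| 0.35 with h' | h'
    · exact val_sum N hN X hX α β hα hβ j 0.25 0.35 0.98 (by norm_num) (by norm_num) ξ h h'
        (by unfold BB fB hB GG Ph0; norm_num)
    · exact val_sum N hN X hX α β hα hβ j 0.35 0.5 0.98 (by norm_num) (by norm_num) ξ h' h2
        (by unfold BB fB hB GG Ph0; norm_num)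
  · intro x hx
    refine (norm_sum_le _ _).trans ?_
    refine (far_sum N hN X hX x hx (fun k x => ‖F0 N (α k) (β k) x‖)
          (fun k n x => by simp only [F0_per N hN0]) (Ph0 1.0445 0.372)
          (Ph0_nonneg _ _ _ (by norm_num) (by norm_num) (GG_nonneg _ (by norm_num)))
          (fun k x hs G hG => F0_bd N hN x hs _ _ _ _ G (hα k) (hβ k) hG)).trans ?_
    unfold BB fB hB GG Ph0; norm_num
  · intro j ξ hξ
    have hT := near_T N hN X hX α β hα hβ j (hp1 j) ξ hξ
    obtain ⟨k0, k1, k2, k3⟩ := hK ξ hξ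
    rw [hp j] at hT
    have e : p0 N X α β (X j + ξ) - v j = (p0 N X α β (X j + ξ) - v j + (1 - (K0 N ξ : ℂ)) * (α j + β j * (s0 N ξ : ℂ)))
      - ((1 - K0 N ξ : ℝ) : ℂ) * (α j + β j * (s0 N ξ : ℂ)) := by push_cast; ring
    rw [e]
    refine (norm_sub_le _ _).trans ?_
    have b2 : ‖((1 - K0 N ξ : ℝ) : ℂ) * (α j + β j * (s0 N ξ : ℂ))‖ ≤ (20 * ξ ^ 2) * 1.2 := by
      rw [norm_mul, Complex.norm_real, Real.norm_eq_abs, abs_of_nonneg (by linarith)]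
      gcongr
      refine (norm_add_le _ _).trans ?_
      linarith [hα j, hs j ξ hξ]
    have : ξ ^ 2 ≤ 0.2 * |ξ| := by rw [← sq_abs ξ]; nlinarith [abs_nonneg ξ]
    nlinarith [abs_nonneg ξ]

end
end SR

namespace SR
noncomputable section

/-- `e^{-2πix}` -/
def em (x : ℝ) : ℂ := Complex.exp (((-2 * π * x : ℝ) : ℂ) * I)

lemma em_add (x y : ℝ) : em (x + y) = em x * em y := by
  unfold em; rw [← Complex.exp_add]; congr 1; push_cast; ring
lemma em_zero : em 0 = 1 := by simp [em]
lemma norm_em (x : ℝ) : ‖em x‖ = 1 := Complex.norm_exp_ofReal_mul_I _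
lemma em_pow (x : ℝ) (k : ℕ) : em x ^ k = em (k * x) := by
  unfold em; rw [← Complex.exp_nat_mul]; congr 1; push_cast; ring
lemma em_int (n : ℤ) : em n = 1 := by
  unfold em
  rw [Complex.exp_eq_one_iff]
  exact ⟨-n, by push_cast; ring⟩
lemma em_neg_mul (x : ℝ) : em (-x) * em x = 1 := by
  rw [← em_add]; simp [em_zero]
lemma em_sub_one (x : ℝ) : ‖em x - 1‖ ≤ 2 * π * |x| := by
  unfold em
  have h := Real.norm_exp_I_mul_ofReal_sub_one_le (x := -2 * π * x)
  rw [mul_comm] at h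
  refine h.trans (le_of_eq ?_)
  rw [Real.norm_eq_abs, abs_mul, abs_mul, abs_neg, abs_of_pos Real.pi_pos]; norm_num
lemma em_eq (k : ℕ) (x : ℝ) : Complex.exp (-2 * (Real.pi : ℂ) * Complex.I * (k : ℂ) * (x : ℂ)) = em x ^ k := by
  rw [em_pow]; unfold em; congr 1; push_cast; ring

lemma dirichlet (N : ℕ) (hN : 0 < N) (u : ℝ) :
    em ((N - 1) / 2 * u) * (d0 N (N * u) : ℂ) = (1 / (N : ℂ)) * ∑ k ∈ Finset.range N, em u ^ k := by
  have hN' : (N : ℝ) ≠ 0 := by positivity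
  have hth : ∀ k : ℕ, th N k * (N * u) = π * (2 * k - (N - 1)) * u := by
    intro k; unfold th; field_simp
  have hsin : ∑ k ∈ Finset.range N, Real.sin (th N k * (N * u)) = 0 := by
    have h := Finset.sum_range_reflect (fun k => Real.sin (th N k * (N * u))) N
    have h2 : ∑ k ∈ Finset.range N, Real.sin (th N (N - 1 - k) * (N * u)) =
        - ∑ k ∈ Finset.range N, Real.sin (th N k * (N * u)) := by
      rw [← Finset.sum_neg_distrib]
      refine Finset.sum_congr rfl fun k hk => ?_
      have hk' := Finset.mem_range.1 hk
      rw [hth, hth, ← Real.sin_neg]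
      congr 1
      have : ((N - 1 - k : ℕ) : ℝ) = N - 1 - k := by
        rw [Nat.cast_sub (by omega), Nat.cast_sub (by omega)]; norm_num
      rw [this]; ring
    rw [h2] at h
    linarith
  have e : (((∑ k ∈ Finset.range N, Real.cos (th N k * (N * u)) : ℝ)) : ℂ) =
      ∑ k ∈ Finset.range N, Complex.exp (((-(th N k * (N * u)) : ℝ) : ℂ) * I) := by
    have : ∀ k ∈ Finset.range N, Complex.exp (((-(th N k * (N * u)) : ℝ) : ℂ) * I) =
       ((Real.cos (th N k * (N * u)) : ℝ) : ℂ) - ((Real.sin (th N k * (N * u)) : ℝ) : ℂ) * I := by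
      intro k _
      rw [Complex.exp_mul_I, ← Complex.ofReal_cos, ← Complex.ofReal_sin, Real.cos_neg, Real.sin_neg]
      push_cast; ring
    rw [Finset.sum_congr rfl this, Finset.sum_sub_distrib, ← Finset.sum_mul, ← Complex.ofReal_sum,
      ← Complex.ofReal_sum, hsin]
    simp
  unfold d0
  rw [Complex.ofReal_mul, e]
  rw [mul_left_comm, Finset.mul_sum]
  push_cast
  congr 1
  refine Finset.sum_congr rfl fun k _ => ?_
  rw [em_pow]
  unfold em
  rw [← Complex.exp_add]
  congr 1
  have := congrArg (fun x : ℝ => (x : ℂ)) (hth k)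
  push_cast at this ⊢
  linear_combination (-I) * this

open Polynomial in
lemma polyTerm (N : ℕ) (hN : 0 < N) (α β : ℂ) : ∃ G : ℂ[X], G.natDegree ≤ 4 * N - 2 ∧
    ∀ u : ℝ, G.eval (em u) = em ((2 * N - 1) * u) * F0 N α β (N * u) := by
  have hN' : (N : ℂ) ≠ 0 := by exact_mod_cast hN.ne'
  have hNr : (N : ℝ) ≠ 0 := by positivity
  have hpi : (π : ℂ) ≠ 0 := by exact_mod_cast Real.pi_ne_zero
  refine ⟨(C (1 / (N : ℂ)) * ∑ k ∈ Finset.range N, X ^ k) ^ 4 *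
    (C α * X + C (β * N / (4 * π * I)) * (1 - X ^ 2)), ?_, ?_⟩
  · have h1 : (C (1 / (N : ℂ)) * ∑ k ∈ Finset.range N, X ^ k : ℂ[X]).natDegree ≤ N - 1 := by
      refine (natDegree_C_mul_le _ _).trans ?_
      refine natDegree_sum_le_of_forall_le _ _ fun k hk => ?_
      rw [natDegree_X_pow]
      have := Finset.mem_range.1 hk
      omega
    have h2 : (C α * X + C (β * N / (4 * π * I)) * (1 - X ^ 2) : ℂ[X]).natDegree ≤ 2 := by
      compute_degree
    have h3 := natDegree_pow_le_of_le 4 h1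
    have := natDegree_mul_le_of_le h3 h2
    omega
  · intro u
    rw [eval_mul, eval_pow, eval_mul, eval_C, eval_finsetSum]
    simp only [eval_pow, eval_X, eval_add, eval_mul, eval_C, eval_sub, eval_one]
    rw [← dirichlet N hN u, mul_pow, em_pow]
    unfold F0 K0
    have e1 : em ((2 * N - 1) * u) = em ((4 : ℕ) * ((N - 1) / 2 * u)) * em u := by
      rw [← em_add]; congr 1; push_cast; ring
    have e2 : ((s0 N (N * u) : ℝ) : ℂ) * em u = N / (4 * π * I) * (1 - em u ^ 2) := by
      unfold s0
      have : 2 * π / N * (N * u) = 2 * π * u := by field_simp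
      rw [this]
      push_cast
      rw [Complex.sin]
      have a1 : Complex.exp (-(2 * π * u) * I) = em u := by unfold em; congr 1; push_cast; ring
      have a2 : Complex.exp ((2 * π * u) * I) * em u = 1 := by
        unfold em; rw [← Complex.exp_add, Complex.exp_eq_one_iff]; exact ⟨0, by push_cast; ring⟩
      rw [a1]
      have hI : I * I = -1 := Complex.I_mul_I
      field_simp
      linear_combination (-4 * I ^ 2) * a2 + (4 * em u ^ 2 - 4) * hI
    rw [e1]
    push_cast
    push_cast at e2
    linear_combination (- em (4 * ((N - 1) / 2 * u)) * (d0 N (N * u) : ℂ) ^ 4 * β) * e2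

open Polynomial in
lemma polyP (N : ℕ) (hN : 0 < N) {S : ℕ} (t : Fin S → ℝ) (α β : Fin S → ℂ) :
    ∃ Q : ℂ[X], Q.natDegree ≤ 4 * N - 2 ∧
    ∀ u : ℝ, Q.eval (em u) = em ((2 * N - 1) * u) * p0 N (fun j => N * t j) α β (N * u) := by
  choose G hG hG' using fun k => polyTerm N hN (α k) (β k)
  refine ⟨∑ k, C (em ((2 * N - 1) * t k)) * (G k).comp (C (em (- t k)) * X), ?_, ?_⟩
  · refine natDegree_sum_le_of_forall_le _ _ fun k _ => ?_
    refine (natDegree_C_mul_le _ _).trans (natDegree_comp_le.trans ?_)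
    have : (C (em (- t k)) * X : ℂ[X]).natDegree ≤ 1 := by compute_degree
    calc _ ≤ (4 * N - 2) * 1 := Nat.mul_le_mul (hG k) this
      _ = _ := by ring
  · intro u
    rw [eval_finsetSum]
    unfold p0
    rw [Finset.mul_sum]
    refine Finset.sum_congr rfl fun k _ => ?_
    rw [eval_mul, eval_C, eval_comp, eval_mul, eval_C, eval_X, ← em_add, hG', ← mul_assoc, ← em_add]
    congr 2
    · ring
    · ring

open Polynomial in
lemma parseval (Q : ℂ[X]) (m : ℕ) (hm : Q.natDegree < m) (h : ∀ u, ‖Q.eval (em u)‖ ≤ 1) :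
    ∑ k : Fin m, ‖Q.coeff k‖ ^ 2 ≤ 1 := by
  have e : ∑ k : Fin m, ‖Q.coeff k‖ ^ 2 = ∑ i ∈ Q.support, ‖Q.coeff i‖ ^ 2 := by
    rw [Fin.sum_univ_eq_sum_range (fun k => ‖Q.coeff k‖ ^ 2) m]
    symm
    apply Finset.sum_subset
    · intro i hi
      rw [Finset.mem_range]
      exact (le_natDegree_of_mem_supp i hi).trans_lt hm
    · intro i _ hi
      rw [notMem_support_iff.1 hi]; simp
  rw [e, Polynomial.sum_sq_norm_coeff_eq_circleAverage]
  apply Real.circleAverage_mono_on_of_le_circle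
  · apply ContinuousOn.circleIntegrable zero_le_one
    fun_prop
  · intro z hz
    have hz' : ‖z‖ = 1 := by simpa using hz
    have : z = em (-(z.arg) / (2 * π)) := by
      unfold em
      have : (-2 * π * (-(z.arg) / (2 * π))) = z.arg := by
        have := Real.pi_pos; field_simp
      rw [this]
      have h2 := Complex.norm_mul_exp_arg_mul_I z
      rw [hz'] at h2
      simpa using h2.symm
    rw [this]
    exact pow_le_one₀ (norm_nonneg _) (h _)

end
end SR

namespace SR
noncomputable section

lemma distT_bdd (t : ℝ) : BddBelow (Set.range fun n : ℤ => |t - (n : ℝ)|) :=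
  ⟨0, by rintro _ ⟨n, rfl⟩; exact abs_nonneg _⟩
lemma distT_le (t : ℝ) (n : ℤ) : distT t ≤ |t - n| := ciInf_le (distT_bdd t) n
lemma distT_eq (t : ℝ) : distT t = |t - round t| :=
  le_antisymm (distT_le t _) (le_ciInf fun n => round_le t n)
lemma distT_nonneg (t : ℝ) : 0 ≤ distT t := by rw [distT_eq]; exact abs_nonneg _
lemma distT_neg (t : ℝ) : distT (-t) = distT t := by
  have h : ∀ t, distT (-t) ≤ distT t := by
    intro t
    rw [distT_eq t]
    refine (distT_le (-t) (-round t)).trans (le_of_eq ?_)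
    rw [← abs_neg]; congr 1; push_cast; ring
  refine le_antisymm (h t) ?_
  have := h (-t)
  rwa [neg_neg] at this
lemma distT_comm (s t : ℝ) : distT (s - t) = distT (t - s) := by
  rw [← distT_neg]; congr 1; ring
lemma distT_tri (a b c : ℝ) : distT (a - c) ≤ distT (a - b) + distT (b - c) := by
  rw [distT_eq (a - b), distT_eq (b - c)]
  refine (distT_le (a - c) (round (a - b) + round (b - c))).trans ?_
  refine le_trans (le_of_eq ?_) (abs_add_le _ _)
  congr 1; push_cast; ring

lemma p0_per (N : ℕ) (hN : 0 < N) {S : ℕ} (X : Fin S → ℝ) (α β : Fin S → ℂ) (n : ℤ) (x : ℝ) :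
    p0 N X α β (x + n * N) = p0 N X α β x := by
  unfold p0
  refine Finset.sum_congr rfl fun k _ => ?_
  rw [← F0_per N hN n _ _ (x - X k)]; congr 1; ring

/-- The trigonometric polynomial with coefficients `c`. -/
def tp {m : ℕ} (c : Fin m → ℂ) (s : ℝ) : ℂ := ∑ k : Fin m, c k * em s ^ (k : ℕ)

/-- Properties of a dual certificate. -/
structure IsCert (m : ℕ) {S : ℕ} (t : Fin S → ℝ) (v : Fin S → ℂ) (c : Fin m → ℂ) : Prop where
  par : ∑ k, ‖c k‖ ^ 2 ≤ 1
  interp : ∀ j, tp c (t j) = v j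
  le_one : ∀ s, ‖tp c s‖ ≤ 1
  near : ∀ j s, distT (t j - s) ≤ 0.3298 / ((m : ℝ) - 1) → ‖tp c s‖ ≤ 1 - (m : ℝ) ^ 2 / 50 * distT (t j - s) ^ 2
  lip : ∀ j s, distT (t j - s) ≤ 0.3298 / ((m : ℝ) - 1) → ‖tp c s - v j‖ ≤ 30 * m * distT (t j - s)
  far : ∀ s, (∀ j, ¬ distT (t j - s) ≤ 0.3298 / ((m : ℝ) - 1)) → ‖tp c s‖ ≤ 0.997

lemma exists_cert (m : ℕ) (hm : 257 ≤ m) {S : ℕ} (t : Fin S → ℝ)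
    (hsep : ∀ j k, j ≠ k → 4 / ((m : ℝ) - 1) ≤ distT (t j - t k)) (v : Fin S → ℂ) (hv : ∀ j, ‖v j‖ ≤ 1) :
    ∃ c : Fin m → ℂ, IsCert m t v c := by
  obtain ⟨N, hNm, hNm'⟩ : ∃ N : ℕ, 4 * N ≤ m + 1 ∧ m ≤ 4 * N + 2 := ⟨(m + 1) / 4, by omega, by omega⟩
  have hN : 64 ≤ N := by omega
  have hN0 : 0 < N := by omega
  have hmr : (257 : ℝ) ≤ m := by exact_mod_cast hm
  have hm1 : (0 : ℝ) < m - 1 := by linarith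
  have hNr : (64 : ℝ) ≤ N := by exact_mod_cast hN
  have hN1 : 4 * (N : ℝ) ≤ m + 1 := by exact_mod_cast hNm
  have hN2 : (m : ℝ) ≤ 4 * N + 2 := by exact_mod_cast hNm'
  have hNp : (0 : ℝ) < N := by linarith
  have hX : Sep N (fun j => (N : ℝ) * t j) := by
    intro j k hjk n
    have h1 := (hsep j k hjk).trans (distT_le _ n)
    have e : (N : ℝ) * t j - N * t k - n * N = N * (t j - t k - n) := by ring
    simp only
    rw [e, abs_mul, abs_of_pos hNp]
    calc (0.995 : ℝ) ≤ N * (4 / ((m : ℝ) - 1)) := by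
          rw [← mul_div_assoc, le_div_iff₀ hm1]; linarith
      _ ≤ _ := by gcongr
  obtain ⟨α, β, hp, hnear, hval, hfar, hlip⟩ := cert_scaled N hN (fun j => (N : ℝ) * t j) hX
    (fun j => em (-((2 * N - 1) * t j)) * v j) (fun j => by rw [norm_mul, norm_em, one_mul]; exact hv j)
  obtain ⟨Q, hQ, hQe⟩ := polyP N hN0 t α β
  have hdeg : Q.natDegree < m := by omega
  have htp : ∀ s, tp (fun k : Fin m => Q.coeff k) s = em ((2 * N - 1) * s) * p0 N (fun j => (N : ℝ) * t j) α β (N * s) := by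
    intro s
    rw [← hQe, Polynomial.eval_eq_sum_range' hdeg]
    unfold tp
    rw [Fin.sum_univ_eq_sum_range (fun k => Q.coeff k * em s ^ k) m]
  have hnorm : ∀ s, ‖tp (fun k : Fin m => Q.coeff k) s‖ = ‖p0 N (fun j => (N : ℝ) * t j) α β (N * s)‖ := by
    intro s; rw [htp, norm_mul, norm_em, one_mul]
  have hshift : ∀ j (n : ℤ) s, p0 N (fun j => (N : ℝ) * t j) α β (N * s) =
      p0 N (fun j => (N : ℝ) * t j) α β (N * t j + N * (s - t j - n)) := by
    intro j n s
    have h := p0_per N hN0 (fun j => (N : ℝ) * t j) α β n (N * t j + N * (s - t j - n))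
    rw [← h]; congr 1; ring
  have hcases : ∀ s, ‖tp (fun k : Fin m => Q.coeff k) s‖ ≤ 0.98 ∨
      ∃ j, ∃ n : ℤ, ‖tp (fun k : Fin m => Q.coeff k) s‖ ≤ 1 - 0.5 * (N * (s - t j - n)) ^ 2 := by
    intro s
    rw [hnorm]
    by_cases h : ∀ k (n : ℤ), 0.5 ≤ |(N : ℝ) * s - N * t k - n * N|
    · left; exact hfar _ h
    · push Not at h
      obtain ⟨j, n, hjn⟩ := h
      have e : (N : ℝ) * s - N * t j - n * N = N * (s - t j - n) := by ring
      rw [e] at hjn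
      rw [hshift j n s]
      rcases le_total |(N : ℝ) * (s - t j - n)| 0.2 with h | h
      · right; exact ⟨j, n, by rw [← hshift j n s, hshift j n s]; exact hnear j _ h⟩
      · left; exact hval j _ h hjn.le
  have hle : ∀ s, ‖tp (fun k : Fin m => Q.coeff k) s‖ ≤ 1 := by
    intro s
    rcases hcases s with h | ⟨j, n, h⟩
    · linarith
    · nlinarith [sq_nonneg (N * (s - t j - n))]
  have hnr : ∀ j s, distT (t j - s) ≤ 0.3298 / ((m : ℝ) - 1) → ∃ n : ℤ, |(N : ℝ) * (s - t j - n)| = N * distT (t j - s) ∧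
      |(N : ℝ) * (s - t j - n)| ≤ 0.2 := by
    intro j s h
    refine ⟨round (s - t j), ?_⟩
    have e : |(N : ℝ) * (s - t j - round (s - t j))| = N * distT (t j - s) := by
      rw [abs_mul, abs_of_pos hNp, distT_comm, distT_eq]
    refine ⟨e, ?_⟩
    rw [e]
    calc N * distT (t j - s) ≤ N * (0.3298 / ((m : ℝ) - 1)) := by gcongr
      _ ≤ 0.2 := by rw [← mul_div_assoc, div_le_iff₀ hm1]; linarith
  refine ⟨fun k => Q.coeff k, ?_, ?_, hle, ?_, ?_, ?_⟩
  · apply parseval Q m hdeg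
    intro u
    rw [hQe, ← htp]; exact hle u
  · intro j
    rw [htp, hp j, ← mul_assoc, mul_comm (em _), em_neg_mul, one_mul]
  · intro j s h
    obtain ⟨n, h1, h2⟩ := hnr j s h
    rw [hnorm, hshift j n s]
    refine (hnear j _ h2).trans ?_
    rw [← sq_abs, h1, mul_pow]
    have : (m : ℝ) ^ 2 / 50 ≤ 0.5 * N ^ 2 := by
      have : (m : ℝ) ≤ 5 * N := by linarith
      nlinarith
    have := mul_le_mul_of_nonneg_right this (sq_nonneg (distT (t j - s)))
    linarith
  · intro j s h
    obtain ⟨n, h1, h2⟩ := hnr j s h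
    have hl := hlip j _ h2
    have hd := distT_nonneg (t j - s)
    set ξ := (N : ℝ) * (s - t j - n) with hξ
    set Y := p0 N (fun j => (N : ℝ) * t j) α β (N * t j + ξ) with hY
    have e1 : em ((2 * N - 1) * s) = em ((2 * N - 1) * t j) * em ((2 * N - 1) * (s - t j - n)) := by
      have : ((2 * N - 1) * s : ℝ) = (2 * N - 1) * t j + (2 * N - 1) * (s - t j - n) + (((2 * N - 1) * n : ℤ) : ℝ) := by
        push_cast; ring
      rw [this, em_add, em_int, mul_one, em_add]
    have e2 : tp (fun k : Fin m => Q.coeff k) s - v j =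
        em ((2 * N - 1) * s) * (Y - em (-((2 * N - 1) * t j)) * v j) + (em ((2 * N - 1) * (s - t j - n)) - 1) * v j := by
      rw [htp, hshift j n s, e1]
      linear_combination (em ((2 * N - 1) * (s - t j - n)) * v j) * em_neg_mul ((2 * N - 1) * t j)
    rw [e2]
    refine (norm_add_le _ _).trans ?_
    rw [norm_mul, norm_em, one_mul, norm_mul]
    have hb : ‖em ((2 * N - 1) * (s - t j - n)) - 1‖ ≤ 14 * (N * distT (t j - s)) := by
      refine (em_sub_one _).trans ?_
      rw [abs_mul, abs_of_pos (by linarith : (0 : ℝ) < 2 * N - 1)]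
      rw [← h1, hξ, abs_mul, abs_of_pos hNp]
      have hpi := Real.pi_lt_d2
      have h0 := abs_nonneg (s - t j - n)
      have hpi0 := Real.pi_pos
      calc 2 * π * ((2 * N - 1) * |s - t j - n|) ≤ 2 * 3.15 * ((2 * N) * |s - t j - n|) :=
            mul_le_mul (by linarith) (mul_le_mul_of_nonneg_right (by linarith) h0)
              (mul_nonneg (by linarith) h0) (by norm_num)
        _ ≤ _ := by nlinarith [mul_nonneg hNp.le h0]
    have hb2 : ‖em ((2 * N - 1) * (s - t j - n)) - 1‖ * ‖v j‖ ≤ 14 * (N * distT (t j - s)) :=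
      (mul_le_of_le_one_right (norm_nonneg _) (hv j)).trans hb
    rw [h1] at hl
    have : 54 * (N * distT (t j - s)) ≤ 30 * m * distT (t j - s) := by
      have : 54 * (N : ℝ) ≤ 30 * m := by linarith
      nlinarith
    linarith
  · intro s h
    rcases hcases s with h' | ⟨j, n, h'⟩
    · linarith
    · refine h'.trans ?_
      have h1 := h j
      push Not at h1
      have h2 : distT (t j - s) ≤ |s - t j - n| := by rw [distT_comm]; exact distT_le _ _
      have h3 : 0.08 ≤ N * |s - t j - n| := by
        calc (0.08 : ℝ) ≤ N * (0.3298 / ((m : ℝ) - 1)) := by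
              rw [← mul_div_assoc, le_div_iff₀ hm1]; linarith
          _ ≤ _ := by gcongr; linarith
      rw [← sq_abs, abs_mul, abs_of_pos hNp]
      nlinarith

end
end SR

namespace SR
noncomputable section

lemma norm2_add {n : ℕ} (x y : Fin n → ℂ) : norm2 (x + y) ≤ norm2 x + norm2 y := by
  have h := norm_add_le (WithLp.toLp 2 x : EuclideanSpace ℂ (Fin n)) (WithLp.toLp 2 y)
  simpa [EuclideanSpace.norm_eq, norm2] using h

lemma norm2_sub_comm {n : ℕ} (x y : Fin n → ℂ) : norm2 (x - y) = norm2 (y - x) := by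
  unfold norm2
  congr 1
  refine Finset.sum_congr rfl fun i _ => ?_
  rw [Pi.sub_apply, Pi.sub_apply, norm_sub_rev]

lemma norm2_cs {n : ℕ} (c y : Fin n → ℂ) (hc : ∑ k, ‖c k‖ ^ 2 ≤ 1) : ‖∑ k, c k * y k‖ ≤ norm2 y := by
  refine (norm_sum_le _ _).trans ?_
  simp_rw [norm_mul]
  refine (Real.sum_mul_le_sqrt_mul_sqrt _ _ _).trans ?_
  have : √(∑ k, ‖c k‖ ^ 2) ≤ 1 := by
    exact Real.sqrt_le_one.mpr hc
  exact mul_le_of_le_one_left (Real.sqrt_nonneg _) this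

lemma pairing {m R : ℕ} (c : Fin m → ℂ) (a : Fin R → ℂ) (t : Fin R → ℝ) :
    ∑ j, a j * tp c (t j) = ∑ k, c k * fourierCoeffs m a t k := by
  unfold tp fourierCoeffs
  simp_rw [em_eq, Finset.mul_sum]
  rw [Finset.sum_comm]
  refine Finset.sum_congr rfl fun k _ => Finset.sum_congr rfl fun j _ => ?_
  ring

lemma pair_diff {m R S : ℕ} (c : Fin m → ℂ) (hc : ∑ k, ‖c k‖ ^ 2 ≤ 1) (a : Fin R → ℂ) (t : Fin R → ℝ)
    (b : Fin S → ℂ) (s : Fin S → ℝ) :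
    ‖∑ j, a j * tp c (t j) - ∑ j, b j * tp c (s j)‖ ≤ norm2 (fourierCoeffs m a t - fourierCoeffs m b s) := by
  rw [pairing, pairing, ← Finset.sum_sub_distrib]
  simp_rw [← mul_sub]
  exact norm2_cs c _ hc

lemma mem_near {R S : ℕ} (r : Fin R → ℝ) (s : Fin S → ℝ) (m : ℕ) (j : Fin R) (k : Fin S) :
    k ∈ nearIdx r s m j ↔ distT (r j - s k) ≤ 0.3298 / ((m : ℝ) - 1) := by
  simp [nearIdx]

lemma mem_far {R S : ℕ} (r : Fin R → ℝ) (s : Fin S → ℝ) (m : ℕ) (k : Fin S) :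
    k ∈ farIdx r s m ↔ ∀ j, ¬ distT (r j - s k) ≤ 0.3298 / ((m : ℝ) - 1) := by
  simp [farIdx, nearIdx]

lemma decomp {E : Type*} [AddCommMonoid E] (m : ℕ) (hm : 257 ≤ m) {R S : ℕ} (t : Fin R → ℝ) (s : Fin S → ℝ)
    (hsep : ∀ j k, j ≠ k → 4 / ((m : ℝ) - 1) ≤ distT (t j - t k)) (g : Fin S → E) :
    ∑ k, g k = ∑ j, ∑ k ∈ nearIdx t s m j, g k + ∑ k ∈ farIdx t s m, g k := by
  classical
  have hm1 : (0 : ℝ) < m - 1 := by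
    have : (257 : ℝ) ≤ m := by exact_mod_cast hm
    linarith
  have hdis : Set.PairwiseDisjoint (↑(Finset.univ : Finset (Fin R))) (nearIdx t s m) := by
    intro i _ j _ hij
    rw [Function.onFun, Finset.disjoint_left]
    intro k h1 h2
    rw [mem_near] at h1 h2
    have h3 := distT_tri (t i) (s k) (t j)
    rw [distT_comm (s k)] at h3
    have h4 := hsep i j hij
    have h5 : 4 / ((m : ℝ) - 1) ≤ 0.6596 / ((m : ℝ) - 1) := by
      calc _ ≤ _ := h4.trans (h3.trans (add_le_add h1 h2))
        _ = _ := by ring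
    rw [div_le_div_iff_of_pos_right hm1] at h5
    norm_num at h5
  rw [← Finset.sum_biUnion hdis, ← Finset.sum_union]
  · refine Finset.sum_congr ?_ fun _ _ => rfl
    ext k
    simp only [Finset.mem_univ, Finset.mem_union, Finset.mem_biUnion, true_and, true_iff, mem_near, mem_far]
    by_cases h : ∃ j, distT (t j - s k) ≤ 0.3298 / ((m : ℝ) - 1)
    · exact Or.inl h
    · right; push Not at h ⊢; exact h
  · rw [Finset.disjoint_left]
    intro k h1 h2
    simp only [Finset.mem_biUnion, Finset.mem_univ, true_and, mem_near, mem_far] at h1 h2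
    obtain ⟨j, hj⟩ := h1
    exact h2 j hj

lemma exists_phase {S : ℕ} (a : Fin S → ℂ) : ∃ v : Fin S → ℂ, (∀ j, ‖v j‖ ≤ 1) ∧ ∀ j, a j * v j = ‖a j‖ := by
  refine ⟨fun j => (starRingEnd ℂ) (a j) / ‖a j‖, fun j => ?_, fun j => ?_⟩
  · rw [norm_div, RCLike.norm_conj]
    simp only [norm_real, norm_norm]
    exact div_self_le_one _
  · by_cases h : a j = 0
    · simp [h]
    · have : (‖a j‖ : ℂ) ≠ 0 := by simpa using h
      rw [← mul_div_assoc, Complex.mul_conj, Complex.normSq_eq_norm_sq]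
      field_simp
      push_cast; ring

lemma recovery12 (m : ℕ) (hm : 257 ≤ m) {R S : ℕ} (t : Fin R → ℝ) (s : Fin S → ℝ)
    (hsep : ∀ j k, j ≠ k → 4 / ((m : ℝ) - 1) ≤ distT (t j - t k)) (a : Fin R → ℂ) (b : Fin S → ℂ) (ε : ℝ)
    (hF : norm2 (fourierCoeffs m a t - fourierCoeffs m b s) ≤ 2 * ε) (htv : tvNorm b ≤ tvNorm a) :
    ∑ k ∈ farIdx t s m, ‖b k‖ ≤ 1000 * ε ∧
    ∑ j, ∑ k ∈ nearIdx t s m j, ‖b k‖ * distT (t j - s k) ^ 2 ≤ 100 * ε / (m : ℝ) ^ 2 := by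
  obtain ⟨v, hv, hav⟩ := exists_phase a
  obtain ⟨c, hc⟩ := exists_cert m hm t hsep v hv
  have h1 := (pair_diff c hc.par a t b s).trans hF
  have h2 : ∑ j, a j * tp c (t j) = ((tvNorm a : ℝ) : ℂ) := by
    unfold tvNorm; push_cast
    refine Finset.sum_congr rfl fun j _ => ?_
    rw [hc.interp, hav]
  rw [h2] at h1
  have h0 : 0 ≤ tvNorm a := Finset.sum_nonneg fun _ _ => norm_nonneg _
  have h3 : tvNorm a ≤ 2 * ε + ∑ k, ‖b k‖ * ‖tp c (s k)‖ := by
    have e : ‖((tvNorm a : ℝ) : ℂ)‖ = tvNorm a := by rw [norm_real, Real.norm_of_nonneg h0]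
    have h4 := norm_sub_norm_le ((tvNorm a : ℝ) : ℂ) (∑ j, b j * tp c (s j))
    have h5 := norm_sum_le Finset.univ (fun j => b j * tp c (s j))
    simp_rw [norm_mul] at h5
    rw [e] at h4
    linarith
  have h6 : ∑ k, ‖b k‖ * (1 - ‖tp c (s k)‖) ≤ 2 * ε := by
    simp_rw [mul_sub, mul_one]
    rw [Finset.sum_sub_distrib]
    unfold tvNorm at *
    linarith
  rw [decomp m hm t s hsep] at h6
  have hN : (m : ℝ) ^ 2 / 50 * ∑ j, ∑ k ∈ nearIdx t s m j, ‖b k‖ * distT (t j - s k) ^ 2 ≤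
      ∑ j, ∑ k ∈ nearIdx t s m j, ‖b k‖ * (1 - ‖tp c (s k)‖) := by
    simp_rw [Finset.mul_sum]
    refine Finset.sum_le_sum fun j _ => Finset.sum_le_sum fun k hk => ?_
    rw [mem_near] at hk
    have := mul_le_mul_of_nonneg_left (hc.near j _ hk) (norm_nonneg (b k))
    linarith
  have hFar : 0.003 * ∑ k ∈ farIdx t s m, ‖b k‖ ≤ ∑ k ∈ farIdx t s m, ‖b k‖ * (1 - ‖tp c (s k)‖) := by
    rw [Finset.mul_sum]
    refine Finset.sum_le_sum fun k hk => ?_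
    rw [mem_far] at hk
    have := mul_le_mul_of_nonneg_left (hc.far _ hk) (norm_nonneg (b k))
    linarith
  have hm0 : (0 : ℝ) < (m : ℝ) ^ 2 := by
    have : 0 < m := by omega
    positivity
  have n1 : 0 ≤ ∑ j, ∑ k ∈ nearIdx t s m j, ‖b k‖ * distT (t j - s k) ^ 2 :=
    Finset.sum_nonneg fun j _ => Finset.sum_nonneg fun k _ => mul_nonneg (norm_nonneg _) (sq_nonneg _)
  have n2 : 0 ≤ ∑ k ∈ farIdx t s m, ‖b k‖ := Finset.sum_nonneg fun k _ => norm_nonneg _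
  have n3 := mul_nonneg hm0.le n1
  constructor
  · linarith
  · rw [le_div_iff₀ hm0]; linarith

lemma recovery3 (m : ℕ) (hm : 257 ≤ m) {R S : ℕ} (t : Fin R → ℝ) (s : Fin S → ℝ)
    (hsep : ∀ j k, j ≠ k → 4 / ((m : ℝ) - 1) ≤ distT (t j - t k)) (a : Fin R → ℂ) (b : Fin S → ℂ) (ε : ℝ)
    (hF : norm2 (fourierCoeffs m a t - fourierCoeffs m b s) ≤ 2 * ε) (j : Fin R) :
    ‖a j - ∑ k ∈ nearIdx t s m j, b k‖ ≤ 2 * ε +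
      30 * m * (∑ i, ∑ k ∈ nearIdx t s m i, ‖b k‖ * distT (t i - s k)) + ∑ k ∈ farIdx t s m, ‖b k‖ := by
  classical
  obtain ⟨c1, hc1⟩ := exists_cert m hm t hsep (fun _ => 1) (fun _ => by simp)
  obtain ⟨c2, hc2⟩ := exists_cert m hm t hsep (fun i => if i = j then -1 else 1) (fun i => by split_ifs <;> simp)
  set q : ℝ → ℂ := fun s => (tp c1 s - tp c2 s) / 2 with hq
  have hqt : ∀ i, q (t i) = if i = j then 1 else 0 := by
    intro i
    simp only [hq, hc1.interp, hc2.interp]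
    split_ifs <;> norm_num
  have hq1 : ∀ s, ‖q s‖ ≤ 1 := by
    intro s
    have h := norm_sub_le (tp c1 s) (tp c2 s)
    have := hc1.le_one s
    have := hc2.le_one s
    simp only [hq, norm_div, Complex.norm_ofNat]
    linarith
  have hql : ∀ i, ∀ k ∈ nearIdx t s m i, ‖q (s k) - if i = j then 1 else 0‖ ≤ 30 * m * distT (t i - s k) := by
    intro i k hk
    rw [mem_near] at hk
    have h1 := hc1.lip i _ hk
    have h2 := hc2.lip i _ hk
    have e : q (s k) - (if i = j then 1 else 0) =
        ((tp c1 (s k) - 1) - (tp c2 (s k) - if i = j then -1 else 1)) / 2 := by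
      simp only [hq]
      split_ifs <;> ring
    rw [e, norm_div, Complex.norm_ofNat]
    have := norm_sub_le (tp c1 (s k) - 1) (tp c2 (s k) - if i = j then -1 else 1)
    linarith
  have d1 := (pair_diff c1 hc1.par a t b s).trans hF
  have d2 := (pair_diff c2 hc2.par a t b s).trans hF
  have hd : ‖a j - ∑ k, b k * q (s k)‖ ≤ 2 * ε := by
    have e1 : ∑ i, a i * q (t i) = a j := by
      simp_rw [hqt]; simp
    have e2 : a j - ∑ k, b k * q (s k) = ((∑ i, a i * tp c1 (t i) - ∑ k, b k * tp c1 (s k)) -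
        (∑ i, a i * tp c2 (t i) - ∑ k, b k * tp c2 (s k))) / 2 := by
      rw [← e1]
      simp only [hq, ← mul_div_assoc, mul_sub, ← Finset.sum_div, Finset.sum_sub_distrib]
      ring
    rw [e2, norm_div, Complex.norm_ofNat]
    have := norm_sub_le (∑ i, a i * tp c1 (t i) - ∑ k, b k * tp c1 (s k)) (∑ i, a i * tp c2 (t i) - ∑ k, b k * tp c2 (s k))
    linarith
  have e3 : a j - ∑ k ∈ nearIdx t s m j, b k = (a j - ∑ k, b k * q (s k)) +
      (∑ i, ∑ k ∈ nearIdx t s m i, b k * (q (s k) - if i = j then 1 else 0)) +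
      ∑ k ∈ farIdx t s m, b k * q (s k) := by
    rw [decomp m hm t s hsep (fun k => b k * q (s k))]
    have : ∑ i, ∑ k ∈ nearIdx t s m i, b k * (if i = j then (1 : ℂ) else 0) = ∑ k ∈ nearIdx t s m j, b k := by
      rw [Finset.sum_eq_single j]
      · simp
      · intro i _ hi; simp [hi]
      · simp
    simp_rw [mul_sub, Finset.sum_sub_distrib]
    rw [this]; ring
  rw [e3]
  refine (norm_add₃_le).trans ?_
  refine add_le_add (add_le_add hd ?_) ?_
  · refine (norm_sum_le _ _).trans ?_
    rw [Finset.mul_sum]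
    refine Finset.sum_le_sum fun i _ => (norm_sum_le _ _).trans ?_
    rw [Finset.mul_sum]
    refine Finset.sum_le_sum fun k hk => ?_
    rw [norm_mul]
    have := mul_le_mul_of_nonneg_left (hql i k hk) (norm_nonneg (b k))
    linarith
  · refine (norm_sum_le _ _).trans (Finset.sum_le_sum fun k _ => ?_)
    rw [norm_mul]
    exact mul_le_of_le_one_right (norm_nonneg _) (hq1 _)

lemma near_cs (m : ℕ) (hm : 257 ≤ m) {R S : ℕ} (t : Fin R → ℝ) (s : Fin S → ℝ)
    (hsep : ∀ j k, j ≠ k → 4 / ((m : ℝ) - 1) ≤ distT (t j - t k)) (b : Fin S → ℂ) :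
    ∑ i, ∑ k ∈ nearIdx t s m i, ‖b k‖ * distT (t i - s k) ≤
      √(tvNorm b) * √(∑ i, ∑ k ∈ nearIdx t s m i, ‖b k‖ * distT (t i - s k) ^ 2) := by
  have h1 : ∑ i, ∑ k ∈ nearIdx t s m i, ‖b k‖ ≤ tvNorm b := by
    unfold tvNorm
    rw [decomp m hm t s hsep (fun k => ‖b k‖)]
    have : 0 ≤ ∑ k ∈ farIdx t s m, ‖b k‖ := Finset.sum_nonneg fun k _ => norm_nonneg _
    linarith
  refine le_trans ?_ (mul_le_mul_of_nonneg_right (Real.sqrt_le_sqrt h1) (Real.sqrt_nonneg _))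
  rw [Finset.sum_sigma', Finset.sum_sigma', Finset.sum_sigma']
  have h := Real.sum_mul_le_sqrt_mul_sqrt (Finset.univ.sigma (nearIdx t s m)) (fun x => √‖b x.2‖)
    (fun x => √‖b x.2‖ * distT (t x.1 - s x.2))
  simp only [mul_pow, Real.sq_sqrt (norm_nonneg _), ← mul_assoc, Real.mul_self_sqrt (norm_nonneg _)] at h
  exact h

end
end SR

namespace SR
noncomputable section

lemma wFun_eq (β : ℝ) (lam : ℕ) (x : ℝ) :
    wFun β lam x = ∑ k ∈ Finset.range lam, ((β : ℂ)⁻¹ * em x) ^ k := by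
  unfold wFun
  refine Finset.sum_congr rfl fun k _ => ?_
  rw [em_eq, mul_pow]

lemma norm_r (β : ℝ) (hβ : 4 / 3 ≤ β) (x : ℝ) : ‖(β : ℂ)⁻¹ * em x‖ ≤ 3 / 4 := by
  rw [norm_mul, norm_em, mul_one, norm_inv, norm_real, Real.norm_of_nonneg (by linarith),
    inv_le_comm₀ (by linarith) (by norm_num)]
  linarith

lemma geom_le (n : ℕ) : ∑ k ∈ Finset.range n, (3 / 4 : ℝ) ^ k ≤ 4 := by
  have h := mul_neg_geom_sum (3 / 4 : ℝ) n
  have : (0 : ℝ) ≤ (3 / 4) ^ n := by positivity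
  linarith

lemma w_upper (β : ℝ) (hβ : 4 / 3 ≤ β) (lam : ℕ) (x : ℝ) : ‖wFun β lam x‖ ≤ 4 := by
  rw [wFun_eq]
  refine (norm_sum_le _ _).trans (le_trans (Finset.sum_le_sum fun k _ => ?_) (geom_le lam))
  rw [norm_pow]
  exact pow_le_pow_left₀ (norm_nonneg _) (norm_r β hβ x) k

lemma w_lower (β : ℝ) (hβ : 4 / 3 ≤ β) (lam : ℕ) (hl : 1 ≤ lam) (x : ℝ) : 1 / 8 ≤ ‖wFun β lam x‖ := by
  rw [wFun_eq]
  have hr := norm_r β hβ x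
  set r := (β : ℂ)⁻¹ * em x
  have h := congrArg norm (mul_neg_geom_sum r lam)
  rw [norm_mul] at h
  have h1 : ‖1 - r‖ ≤ 7 / 4 := by
    have := norm_sub_le 1 r
    rw [norm_one] at this
    linarith
  have h2 : ‖r ^ lam‖ ≤ 3 / 4 := by
    rw [norm_pow]
    exact (pow_le_of_le_one (norm_nonneg _) (by linarith) (by omega)).trans hr
  have h3 : 1 / 4 ≤ ‖1 - r ^ lam‖ := by
    have := norm_sub_norm_le 1 (r ^ lam)
    rw [norm_one] at this
    linarith
  nlinarith [norm_nonneg (∑ k ∈ Finset.range lam, r ^ k)]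

lemma em_lip (l : ℕ) (s t : ℝ) : ‖em (l * s) - em (l * t)‖ ≤ 2 * π * (l * distT (s - t)) := by
  set n := round (s - t) with hn
  have e : em (l * s) = em (l * t) * em (l * (s - t - n)) := by
    have : (l * s : ℝ) = l * t + l * (s - t - n) + (((l : ℤ) * n : ℤ) : ℝ) := by
      push_cast; ring
    rw [this, em_add, em_int, mul_one, em_add]
  have e2 : em (l * s) - em (l * t) = em (l * t) * (em (l * (s - t - n)) - 1) := by
    rw [e]; ring
  rw [e2, norm_mul, norm_em, one_mul]
  refine (em_sub_one _).trans (le_of_eq ?_)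
  rw [abs_mul, Nat.abs_cast, distT_eq]

lemma w_lip (β : ℝ) (hβ : 4 / 3 ≤ β) (lam m : ℕ) (s t : ℝ) :
    ‖wFun β lam (m * s) - wFun β lam (m * t)‖ ≤ 26 * lam * m * distT (s - t) := by
  have hd := distT_nonneg (s - t)
  rw [wFun_eq, wFun_eq, ← Finset.sum_sub_distrib]
  refine (norm_sum_le _ _).trans ?_
  have key : ∀ k ∈ Finset.range lam, ‖((β : ℂ)⁻¹ * em (m * s)) ^ k - ((β : ℂ)⁻¹ * em (m * t)) ^ k‖ ≤
      (3 / 4 : ℝ) ^ k * (6.5 * (lam * m * distT (s - t))) := by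
    intro k hk
    rw [Finset.mem_range] at hk
    have hk' : (k : ℝ) ≤ lam := by exact_mod_cast hk.le
    rw [mul_pow, mul_pow, ← mul_sub, norm_mul, norm_pow]
    have h1 : ‖(β : ℂ)⁻¹‖ ≤ 3 / 4 := by
      have := norm_r β hβ 0
      rwa [norm_mul, norm_em, mul_one] at this
    refine mul_le_mul (pow_le_pow_left₀ (norm_nonneg _) h1 k) ?_ (norm_nonneg _) (by positivity)
    rw [em_pow, em_pow]
    have h2 := em_lip (k * m) s t
    push_cast at h2
    rw [← mul_assoc, ← mul_assoc]
    refine h2.trans ?_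
    have hpi := Real.pi_lt_d2
    refine mul_le_mul (by linarith) ?_ (by positivity) (by norm_num)
    gcongr
  refine (Finset.sum_le_sum key).trans ?_
  rw [← Finset.sum_mul]
  have h4 := geom_le lam
  have h5 : (0 : ℝ) ≤ 6.5 * (lam * m * distT (s - t)) := by positivity
  have := mul_le_mul_of_nonneg_right h4 h5
  linarith

lemma V_fourier (β : ℝ) (m lam : ℕ) (hm : 0 < m) {R : ℕ} (a : Fin R → ℂ) (t : Fin R → ℝ) :
    (Vmat β m lam).mulVec (fourierCoeffs (lam * m) a t) =
      fourierCoeffs m (fun j => a j * wFun β lam (m * t j)) t := by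
  funext i
  rw [Matrix.mulVec, dotProduct, ← finProdFinEquiv.sum_comp, Fintype.sum_prod_type]
  have hi : ∀ x : Fin lam, ∑ y : Fin m, Vmat β m lam i (finProdFinEquiv (x, y)) *
      fourierCoeffs (lam * m) a t (finProdFinEquiv (x, y)) =
      (β : ℂ)⁻¹ ^ (x : ℕ) * ∑ j, a j * (em (t j) ^ (i : ℕ) * em (m * t j) ^ (x : ℕ)) := by
    intro x
    rw [Finset.sum_eq_single i]
    · have h1 : ((i : ℕ) + m * x) / m = x := by
        rw [Nat.add_mul_div_left _ _ hm, Nat.div_eq_of_lt i.2, zero_add]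
      have h2 : ((i : ℕ) + m * x) % m = i := by
        rw [Nat.add_mul_mod_self_left, Nat.mod_eq_of_lt i.2]
      simp only [Vmat, Matrix.of_apply, finProdFinEquiv_apply_val, h1, h2, if_true, fourierCoeffs]
      congr 1
      refine Finset.sum_congr rfl fun j _ => ?_
      rw [em_eq, pow_add, pow_mul, em_pow (t j) m]
    · intro y _ hy
      have h2 : ((y : ℕ) + m * x) % m = y := by
        rw [Nat.add_mul_mod_self_left, Nat.mod_eq_of_lt y.2]
      have h3 : (y : ℕ) ≠ i := fun h => hy (Fin.ext h)
      simp only [Vmat, Matrix.of_apply, finProdFinEquiv_apply_val, h2, if_neg h3, zero_mul]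
    · simp
  simp_rw [hi]
  unfold fourierCoeffs
  simp_rw [em_eq, wFun_eq, mul_pow, ← Fin.sum_univ_eq_sum_range (fun k => (β : ℂ)⁻¹ ^ k * em (m * t _) ^ k) lam]
  simp_rw [Finset.mul_sum, Finset.sum_mul]
  rw [Finset.sum_comm]
  refine Finset.sum_congr rfl fun j _ => Finset.sum_congr rfl fun k _ => ?_
  ring

lemma one_add_pow_le (n : ℕ) : (((n : ℝ) + 3) / (n + 2)) ^ n ≤ 3 := by
  have h0 : (0 : ℝ) ≤ n := Nat.cast_nonneg n
  have h1 : ((n : ℝ) + 3) / (n + 2) ≤ Real.exp (1 / (n + 2)) := by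
    have := Real.add_one_le_exp (1 / ((n : ℝ) + 2))
    refine le_trans (le_of_eq ?_) this
    field_simp; ring
  calc _ ≤ Real.exp (1 / (n + 2)) ^ n := pow_le_pow_left₀ (by positivity) h1 n
    _ = Real.exp (n * (1 / (n + 2))) := by rw [← Real.exp_nat_mul]
    _ ≤ Real.exp 1 := by
      apply Real.exp_le_exp.mpr
      rw [mul_one_div, div_le_one (by positivity)]; linarith
    _ ≤ 3 := by have := Real.exp_one_lt_d9; linarith

lemma eps_bound (A : ℝ) (hA : 0 < A) (K lam m : ℕ) (hK : 2 ≤ K) (hl : 1 ≤ lam) :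
    Real.sqrt (2 * (m : ℝ)) * ((K : ℝ) * ((lam : ℝ) + 1) / ((lam : ℝ) + 2)) ^ (-((lam : ℤ) - 1)) *
      (((lam : ℝ) + 2) * A / (K : ℝ)) ≤ 13 * A * (√m * lam * (K : ℝ) ^ (-(lam : ℝ))) := by
  obtain ⟨n, rfl⟩ : ∃ n, lam = n + 1 := ⟨lam - 1, by omega⟩
  have hKp : (0 : ℝ) < K := by
    have : 0 < K := by omega
    exact_mod_cast this
  have e1 : (-(((n + 1 : ℕ) : ℤ) - 1)) = -(n : ℤ) := by push_cast; ring
  rw [e1, zpow_neg, zpow_natCast, Real.rpow_neg hKp.le, Real.rpow_natCast, Real.sqrt_mul (by norm_num)]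
  push_cast
  have e2 : ((K : ℝ) * ((n : ℝ) + 1 + 1) / ((n : ℝ) + 1 + 2)) = K * (((n : ℝ) + 3) / (n + 2))⁻¹ := by
    rw [inv_div, mul_div_assoc]; ring
  rw [e2, mul_pow, mul_inv, inv_pow, inv_inv]
  have h3 := one_add_pow_le n
  set z := (((n : ℝ) + 3) / (n + 2)) ^ n
  have hz : 0 ≤ z := by positivity
  have hs : √2 ≤ 1.4143 := by
    rw [Real.sqrt_le_left (by norm_num)]; norm_num
  have e3 : √2 * √(m : ℝ) * (((K : ℝ) ^ n)⁻¹ * z) * ((n + 1 + 2) * A / K) =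
      (√2 * z * (n + 3)) * (A * √m * ((K : ℝ) ^ (n + 1))⁻¹) := by
    rw [pow_succ]; field_simp; ring
  rw [e3]
  have h0 : (0 : ℝ) ≤ n := Nat.cast_nonneg n
  have h4 : √2 * z * (n + 3) ≤ 13 * (n + 1) := by
    have : √2 * z ≤ 1.4143 * 3 := mul_le_mul hs h3 hz (by norm_num)
    nlinarith
  have h5 : 0 ≤ A * √m * ((K : ℝ) ^ (n + 1))⁻¹ := by positivity
  have := mul_le_mul_of_nonneg_right h4 h5
  linarith

lemma X_eq (lam m : ℕ) : ((lam * m : ℕ) : ℝ) ^ ((1 : ℝ) / 2) * (lam : ℝ) ^ ((1 : ℝ) / 2) = √m * lam := by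
  rw [← Real.sqrt_eq_rpow, ← Real.sqrt_eq_rpow]
  push_cast
  rw [Real.sqrt_mul (Nat.cast_nonneg _)]
  have := Real.mul_self_sqrt (Nat.cast_nonneg (α := ℝ) lam)
  linear_combination (√m) * this

lemma Y_eq (K lam m : ℕ) (hK : 2 ≤ K) (hl : 1 ≤ lam) :
    lam * √(√m * lam * (K : ℝ) ^ (-(lam : ℝ))) =
    ((lam * m : ℕ) : ℝ) ^ ((1 : ℝ) / 4) * (lam : ℝ) ^ ((5 : ℝ) / 4) * (K : ℝ) ^ (-(lam : ℝ) / 2) := by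
  have hKp : (0 : ℝ) < K := by
    have : 0 < K := by omega
    exact_mod_cast this
  have hlp : (0 : ℝ) < lam := by exact_mod_cast hl
  have hM : (0 : ℝ) ≤ ((lam * m : ℕ) : ℝ) := Nat.cast_nonneg _
  refine (pow_left_inj₀ (by positivity) (by positivity) (two_ne_zero)).mp ?_
  rw [mul_pow, Real.sq_sqrt (by positivity), ← X_eq, mul_pow, mul_pow]
  have e1 : (((lam * m : ℕ) : ℝ) ^ ((1 : ℝ) / 4)) ^ 2 = ((lam * m : ℕ) : ℝ) ^ ((1 : ℝ) / 2) := by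
    rw [← Real.rpow_natCast, ← Real.rpow_mul hM]; norm_num
  have e2 : ((lam : ℝ) ^ ((5 : ℝ) / 4)) ^ 2 = (lam : ℝ) ^ ((1 : ℝ) / 2) * (lam : ℝ) ^ 2 := by
    rw [← Real.rpow_natCast, ← Real.rpow_mul hlp.le, ← Real.rpow_natCast (lam : ℝ) 2, ← Real.rpow_add hlp]; norm_num
  have e3 : ((K : ℝ) ^ (-(lam : ℝ) / 2)) ^ 2 = (K : ℝ) ^ (-(lam : ℝ)) := by
    rw [← Real.rpow_natCast, ← Real.rpow_mul hKp.le]; norm_num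
  rw [e1, e2, e3]; ring

end
end SR

namespace SR
noncomputable section

lemma core (A : ℝ) (hA : 0 < A) (lam m : ℕ) (hl : 1 ≤ lam) (hm : 257 ≤ m) (β : ℝ) (hβ : 4 / 3 ≤ β)
    (ε : ℝ) {R S : ℕ} (a : Fin R → ℂ) (t : Fin R → ℝ) (b : Fin S → ℂ) (s : Fin S → ℝ)
    (hsep : ∀ j k, j ≠ k → 4 / ((m : ℝ) - 1) ≤ distT (t j - t k)) (ha : tvNorm a ≤ A)
    (hF : norm2 (fourierCoeffs m (fun j => a j * wFun β lam (m * t j)) t - fourierCoeffs m b s) ≤ 2 * ε)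
    (htv : tvNorm b ≤ tvNorm (fun j => a j * wFun β lam (m * t j))) :
    E1 a t (fun k => b k / wFun β lam ((m : ℝ) * s k)) s m ≤ 8016 * ε + 38080 * (lam * √(A * ε)) ∧
    E2 a t (fun k => b k / wFun β lam ((m : ℝ) * s k)) s m ≤ 800 * ε / (m : ℝ) ^ 2 ∧
    E3 a t (fun k => b k / wFun β lam ((m : ℝ) * s k)) s m ≤ 8000 * ε := by
  have hε : 0 ≤ ε := by
    have : 0 ≤ 2 * ε := le_trans (Real.sqrt_nonneg _) hF
    linarith
  have hmp : (0 : ℝ) < m := by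
    have : 0 < m := by omega
    exact_mod_cast this
  have hl1 : (1 : ℝ) ≤ lam := by exact_mod_cast hl
  have hwl : ∀ x, 1 / 8 ≤ ‖wFun β lam x‖ := w_lower β hβ lam hl
  have hwp : ∀ x, 0 < ‖wFun β lam x‖ := fun x => by have := hwl x; linarith
  have hw0 : ∀ x, wFun β lam x ≠ 0 := fun x => norm_pos_iff.mp (hwp x)
  have hwi : ∀ x, ‖(wFun β lam x)⁻¹‖ ≤ 8 := by
    intro x
    rw [norm_inv, inv_le_comm₀ (hwp x) (by norm_num)]
    have := hwl x; linarith
  have hdiv : ∀ k, ‖b k / wFun β lam ((m : ℝ) * s k)‖ ≤ 8 * ‖b k‖ := by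
    intro k
    rw [div_eq_mul_inv, norm_mul, mul_comm]
    exact mul_le_mul_of_nonneg_right (hwi _) (norm_nonneg _)
  obtain ⟨h3, h2⟩ := recovery12 m hm t s hsep _ b ε hF htv
  have htvb : tvNorm b ≤ 4 * A := by
    refine htv.trans ?_
    have : tvNorm (fun j => a j * wFun β lam (m * t j)) ≤ 4 * tvNorm a := by
      unfold tvNorm
      rw [Finset.mul_sum]
      refine Finset.sum_le_sum fun j _ => ?_
      rw [norm_mul, mul_comm]
      exact mul_le_mul_of_nonneg_right (w_upper β hβ lam _) (norm_nonneg _)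
    linarith
  refine ⟨?_, ?_, ?_⟩
  · have hN1 : (m : ℝ) * (∑ i, ∑ k ∈ nearIdx t s m i, ‖b k‖ * distT (t i - s k)) ≤ 20 * √(A * ε) := by
      have h := near_cs m hm t s hsep b
      have h' : √(tvNorm b) * √(∑ i, ∑ k ∈ nearIdx t s m i, ‖b k‖ * distT (t i - s k) ^ 2) ≤
          √(4 * A) * √(100 * ε / (m : ℝ) ^ 2) :=
        mul_le_mul (Real.sqrt_le_sqrt htvb) (Real.sqrt_le_sqrt h2) (Real.sqrt_nonneg _) (Real.sqrt_nonneg _)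
      have e : √(4 * A) * √(100 * ε / (m : ℝ) ^ 2) = 20 * √(A * ε) / m := by
        rw [← Real.sqrt_mul (by positivity)]
        have : 4 * A * (100 * ε / (m : ℝ) ^ 2) = (20 / m) ^ 2 * (A * ε) := by ring
        rw [this, Real.sqrt_mul (by positivity), Real.sqrt_sq (by positivity)]; ring
      rw [e] at h'
      have h'' := h.trans h'
      rw [le_div_iff₀ hmp] at h''
      linarith
    have hrhs : 0 ≤ 8016 * ε + 38080 * (lam * √(A * ε)) := by positivity
    unfold E1
    refine Real.iSup_le (fun j => ?_) hrhs
    have hj := recovery3 m hm t s hsep _ b ε hF j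
    set N1 := ∑ i, ∑ k ∈ nearIdx t s m i, ‖b k‖ * distT (t i - s k) with hN1d
    have hsub : ∑ k ∈ nearIdx t s m j, ‖b k‖ * distT (t j - s k) ≤ N1 := by
      rw [hN1d]
      exact Finset.single_le_sum (f := fun i => ∑ k ∈ nearIdx t s m i, ‖b k‖ * distT (t i - s k))
        (fun i _ => Finset.sum_nonneg fun k _ => mul_nonneg (norm_nonneg _) (distT_nonneg _)) (Finset.mem_univ j)
    set W := wFun β lam (m * t j) with hW
    have e : a j - ∑ k ∈ nearIdx t s m j, b k / wFun β lam ((m : ℝ) * s k) =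
        W⁻¹ * (a j * W - ∑ k ∈ nearIdx t s m j, b k) +
        ∑ k ∈ nearIdx t s m j, b k * (W⁻¹ - (wFun β lam ((m : ℝ) * s k))⁻¹) := by
      simp_rw [mul_sub, Finset.sum_sub_distrib, ← Finset.sum_mul, ← div_eq_mul_inv]
      have hW0 : W ≠ 0 := hw0 _
      field_simp
      ring
    rw [e]
    refine (norm_add_le _ _).trans ?_
    have p1 : ‖W⁻¹ * (a j * W - ∑ k ∈ nearIdx t s m j, b k)‖ ≤ 8 * (2 * ε + 30 * m * N1 + 1000 * ε) := by
      rw [norm_mul]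
      exact mul_le_mul (hwi _) (hj.trans (by linarith)) (norm_nonneg _) (by norm_num)
    have p2 : ‖∑ k ∈ nearIdx t s m j, b k * (W⁻¹ - (wFun β lam ((m : ℝ) * s k))⁻¹)‖ ≤ 1664 * lam * (m * N1) := by
      refine (norm_sum_le _ _).trans ?_
      have : ∀ k ∈ nearIdx t s m j, ‖b k * (W⁻¹ - (wFun β lam ((m : ℝ) * s k))⁻¹)‖ ≤
          1664 * lam * m * (‖b k‖ * distT (t j - s k)) := by
        intro k _
        have e2 : W⁻¹ - (wFun β lam ((m : ℝ) * s k))⁻¹ =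
            W⁻¹ * (wFun β lam ((m : ℝ) * s k))⁻¹ * (wFun β lam ((m : ℝ) * s k) - W) := by
          have hW0 : W ≠ 0 := hw0 _
          have := hw0 ((m : ℝ) * s k)
          field_simp
        have hlip := w_lip β hβ lam m (s k) (t j)
        rw [distT_comm] at hlip
        have q1 : ‖W⁻¹‖ * ‖(wFun β lam ((m : ℝ) * s k))⁻¹‖ ≤ 8 * 8 :=
          mul_le_mul (hwi _) (hwi _) (norm_nonneg _) (by norm_num)
        have q2 := mul_le_mul q1 hlip (norm_nonneg _) (by norm_num)
        rw [e2, norm_mul, norm_mul, norm_mul]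
        have q3 := mul_le_mul_of_nonneg_left q2 (norm_nonneg (b k))
        linarith
      refine (Finset.sum_le_sum this).trans ?_
      rw [← Finset.mul_sum]
      have h0 : (0 : ℝ) ≤ 1664 * lam * m := by positivity
      have := mul_le_mul_of_nonneg_left hsub h0
      linarith
    have hsq := Real.sqrt_nonneg (A * ε)
    have p3 : 1664 * (lam : ℝ) * (m * N1) ≤ 1664 * lam * (20 * √(A * ε)) :=
      mul_le_mul_of_nonneg_left hN1 (by positivity)
    have p4 : √(A * ε) ≤ lam * √(A * ε) := le_mul_of_one_le_left hsq hl1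
    linarith
  · unfold E2
    have e : 800 * ε / (m : ℝ) ^ 2 = 8 * (100 * ε / (m : ℝ) ^ 2) := by ring
    rw [e]
    refine le_trans ?_ (mul_le_mul_of_nonneg_left h2 (by norm_num))
    simp_rw [Finset.mul_sum]
    refine Finset.sum_le_sum fun j _ => Finset.sum_le_sum fun k _ => ?_
    rw [← mul_assoc]
    exact mul_le_mul_of_nonneg_right (hdiv k) (sq_nonneg _)
  · unfold E3
    have e : 8000 * ε = 8 * (1000 * ε) := by ring
    rw [e]
    refine le_trans ?_ (mul_le_mul_of_nonneg_left h3 (by norm_num))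
    rw [Finset.mul_sum]
    exact Finset.sum_le_sum fun k _ => hdiv k

end
end SR

/-- Theorem 3.5: reconstruction guarantees for beta-quantization combined
with TV-min, in terms of the errors `𝓔_1^m`, `𝓔_2^m`, `𝓔_3^m`. -/
theorem statement14 :
    ∃ C₁ C₂ C₃ : ℝ, 0 < C₁ ∧ 0 < C₂ ∧ 0 < C₃ ∧
      ∀ (A : ℝ), 0 < A →
      ∀ (K lam m : ℕ), 2 ≤ K → 1 ≤ lam → 257 ≤ m →
      ∀ (β δ εV : ℝ),
        β = (K : ℝ) * ((lam : ℝ) + 1) / ((lam : ℝ) + 2) →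
        δ = ((lam : ℝ) + 2) * A / (K : ℝ) →
        εV = Real.sqrt (2 * (m : ℝ)) * β ^ (-((lam : ℤ) - 1)) * δ →
      ∀ (Δ : ℝ), 4 / ((m : ℝ) - 1) ≤ Δ →
      ∀ (S : ℕ) (a : Fin S → ℂ) (t : Fin S → ℝ),
        (∀ j, t j ∈ Set.Ico (0 : ℝ) 1) → Function.Injective t →
        (∀ j k, j ≠ k → Δ ≤ distT (t j - t k)) →
        tvNorm a ≤ A →
      ∀ (q : Fin (lam * m) → ℂ),
        norm2 ((Vmat β m lam).mulVec (fourierCoeffs (lam * m) a t) -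
            (Vmat β m lam).mulVec q) ≤ εV →
      ∀ (S' : ℕ) (b : Fin S' → ℂ) (s : Fin S' → ℝ),
        (∀ k, s k ∈ Set.Ico (0 : ℝ) 1) → Function.Injective s →
        norm2 ((Vmat β m lam).mulVec q - fourierCoeffs m b s) ≤ εV →
        (∀ (S'' : ℕ) (b' : Fin S'' → ℂ) (s' : Fin S'' → ℝ),
          (∀ k, s' k ∈ Set.Ico (0 : ℝ) 1) → Function.Injective s' →
          norm2 ((Vmat β m lam).mulVec q - fourierCoeffs m b' s') ≤ εV →
          tvNorm b ≤ tvNorm b') →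
        E1 a t (fun k => b k / wFun β lam ((m : ℝ) * s k)) s m ≤
            C₁ * A * ((lam * m : ℕ) : ℝ) ^ ((1 : ℝ) / 2) * (lam : ℝ) ^ ((1 : ℝ) / 2) *
                (K : ℝ) ^ (-(lam : ℝ)) +
              C₁ * (1 + ((lam * m : ℕ) : ℝ) ^ ((1 : ℝ) / 2) * (lam : ℝ) ^ ((1 : ℝ) / 2) *
                  (K : ℝ) ^ (-(lam : ℝ))) ^ ((1 : ℝ) / 2) *
                A * ((lam * m : ℕ) : ℝ) ^ ((1 : ℝ) / 4) * (lam : ℝ) ^ ((5 : ℝ) / 4) *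
                (K : ℝ) ^ (-(lam : ℝ) / 2) ∧
        E2 a t (fun k => b k / wFun β lam ((m : ℝ) * s k)) s m ≤
            C₂ * A * (lam : ℝ) * (K : ℝ) ^ (-(lam : ℝ)) ∧
        E3 a t (fun k => b k / wFun β lam ((m : ℝ) * s k)) s m ≤
            C₃ * A * ((lam * m : ℕ) : ℝ) ^ ((1 : ℝ) / 2) * (lam : ℝ) ^ ((1 : ℝ) / 2) *
              (K : ℝ) ^ (-(lam : ℝ)) := by
  refine ⟨160000, 160000, 160000, by norm_num, by norm_num, by norm_num, ?_⟩
  intro A hA K lam m hK hl hm β δ εV hβ hδ hεV Δ hΔ S a t ht htinj hsep ha q hq S' b s hs hsinj hb hmin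
  have hK2 : (2 : ℝ) ≤ K := by exact_mod_cast hK
  have hl1 : (1 : ℝ) ≤ lam := by exact_mod_cast hl
  have hmr : (257 : ℝ) ≤ m := by exact_mod_cast hm
  have hβ1 : 4 / 3 ≤ β := by
    rw [hβ, le_div_iff₀ (by linarith)]
    nlinarith
  have hVF := SR.V_fourier β m lam (by omega) a t
  rw [hVF] at hq
  have hq' := hq
  rw [SR.norm2_sub_comm] at hq'
  have htv := hmin S _ t ht htinj hq'
  have hF : norm2 (fourierCoeffs m (fun j => a j * wFun β lam (m * t j)) t - fourierCoeffs m b s) ≤ 2 * εV := by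
    have h := SR.norm2_add (fourierCoeffs m (fun j => a j * wFun β lam (m * t j)) t - (Vmat β m lam).mulVec q)
      ((Vmat β m lam).mulVec q - fourierCoeffs m b s)
    rw [sub_add_sub_cancel] at h
    linarith
  obtain ⟨h1, h2, h3⟩ := SR.core A hA lam m hl hm β hβ1 εV a t b s
    (fun j k hjk => hΔ.trans (hsep j k hjk)) ha hF htv
  have hε := SR.eps_bound A hA K lam m hK hl
  rw [← hβ, ← hδ, ← hεV] at hε
  have hX := SR.X_eq lam m
  have hY := SR.Y_eq K lam m hK hl
  have hκ : 0 < (K : ℝ) ^ (-(lam : ℝ)) := Real.rpow_pos_of_pos (by linarith) _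
  set κ := (K : ℝ) ^ (-(lam : ℝ)) with hκd
  have hsm : 1 ≤ √(m : ℝ) := by rw [Real.one_le_sqrt]; linarith
  have hXp : 0 ≤ √(m : ℝ) * lam * κ := by positivity
  set X := √(m : ℝ) * lam * κ with hXd
  have hX' : ∀ C : ℝ, C * A * ((lam * m : ℕ) : ℝ) ^ ((1 : ℝ) / 2) * (lam : ℝ) ^ ((1 : ℝ) / 2) * κ = C * A * X := by
    intro C; rw [hXd, ← hX]; ring
  have hAX : 0 ≤ A * X := mul_nonneg hA.le hXp
  refine ⟨?_, ?_, ?_⟩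
  · refine h1.trans ?_
    rw [hX', hX, ← hXd]
    have e : 160000 * (1 + X) ^ ((1 : ℝ) / 2) * A * ((lam * m : ℕ) : ℝ) ^ ((1 : ℝ) / 4) *
        (lam : ℝ) ^ ((5 : ℝ) / 4) * (K : ℝ) ^ (-(lam : ℝ) / 2) = 160000 * (1 + X) ^ ((1 : ℝ) / 2) * (A * (lam * √X)) := by
      rw [hY]; ring
    rw [e]
    have hs1 : 1 ≤ (1 + X) ^ ((1 : ℝ) / 2) := Real.one_le_rpow (by linarith) (by norm_num)
    have hT : 0 ≤ A * (lam * √X) := by positivity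
    have hs2 : √(A * εV) ≤ 4 * (A * √X) := by
      have : A * εV ≤ (4 * A) ^ 2 * X := by
        have r1 := mul_le_mul_of_nonneg_left hε hA.le
        have r2 := mul_nonneg hA.le hAX
        have r3 : (4 * A) ^ 2 * X = 16 * (A * (A * X)) := by ring
        rw [r3]; linarith
      calc √(A * εV) ≤ √((4 * A) ^ 2 * X) := Real.sqrt_le_sqrt this
        _ = 4 * (A * √X) := by rw [Real.sqrt_mul (by positivity), Real.sqrt_sq (by positivity)]; ring
    have hs3 : lam * √(A * εV) ≤ 4 * (A * (lam * √X)) := by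
      have := mul_le_mul_of_nonneg_left hs2 (by linarith : (0 : ℝ) ≤ lam)
      linarith
    have hs4 : A * (lam * √X) ≤ (1 + X) ^ ((1 : ℝ) / 2) * (A * (lam * √X)) := le_mul_of_one_le_left hT hs1
    linarith
  · refine h2.trans ?_
    have hm2 : (0 : ℝ) < (m : ℝ) ^ 2 := by positivity
    rw [div_le_iff₀ hm2]
    have hAl : 0 ≤ A * lam * κ := by positivity
    have hsq : √(m : ℝ) ≤ (m : ℝ) ^ 2 := by
      have r1 : √(m : ℝ) * √(m : ℝ) = m := Real.mul_self_sqrt (by linarith)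
      have r2 : √(m : ℝ) ≤ m := by
        have := mul_le_mul_of_nonneg_left hsm (Real.sqrt_nonneg (m : ℝ))
        linarith
      have r3 : (m : ℝ) * 1 ≤ m * m := mul_le_mul_of_nonneg_left (by linarith) (by linarith)
      rw [sq]; linarith
    have h5 := mul_le_mul_of_nonneg_left hsq hAl
    have h6 : 0 ≤ A * lam * κ * (m : ℝ) ^ 2 := by positivity
    have h7 : A * X = A * lam * κ * √(m : ℝ) := by rw [hXd]; ring
    linarith
  · refine h3.trans ?_
    rw [hX']
    linarith
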